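/- Let (I_m) and (J_m) be two sequences of intervals with J_m ⊆ I_m for each m. Assume there exist two sequences of integers (ℓ_m) and (n(m)) and a real number M > 0 such that: ℓ_m → ∞; n_{(ℓ_m−1)} − k(ℓ_m−1) + p_1 + 2p_2 ≤ n(m) < n_{ℓ_m}; I_m is contained in some n_{ℓ_m}-crossing; η·h_{n(m)} ≤ |J_m| ≤ h_{n(m)}; and |I_m| ≤ M·h_{n(m)}. If γ_{I_m} → σ as m → ∞ (in the sense of convergence of Radon measures on X^d), then also γ_{J_m} → σ. -/

import Mathlib

/-!
Write `γ_I`, `γ_J` for the empirical measures and fix `N` with `σ(C_N^d) > 0`. It suffices to show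
that along every ultrafilter the measures `γ_{J_m} / γ_{I_m}(C_N^d)` converge, on the ring of finite
unions of boxes, to `a σ` with `0 < a < ∞`: the factor `a` then disappears in the ratios.

* Existence of the limit. On the ring, the limit is additive and bounded by the limit `c σ` of
  `γ_{I_m} / γ_{I_m}(C_N^d)`, so it extends to a measure `τ` (`exists_measure_of_dominated`,
  `NFC.exists_lim_measure`), and `τ ≤ c σ`.

* The limit is a multiple of `σ`. The numbers of visits to a box and to its translate along an
  interval differ by at most one, and `γ_{I_m}(C_N^d) → ∞` since `C_N^d` contains boxes of arbitrarily
  small positive measure (`NFCX.exists_small_box`, `NFCX.emp_tendsto_top`). Thus `τ` takes the same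
  value on a box and on its translate; as almost every point avoids the edges of all high towers, the
  density of `τ` with respect to `σ` is invariant, hence constant (`NFC.eq_smul_of_box_invariant`).

* The multiple is nonzero. This is where the structure of the towers enters. Let `x` be in an
  `n_{ℓ_m}`-crossing, put `N' = n(m) - p₂` and `b = n_{ℓ_m-1} - k(ℓ_m-1)`. The length of `J_m` is at least
  `3 h_{N'}` and that of `I_m` is `O(h_{N'})`. From a time of `I_m`, a bounded number `q` of steps of
  length `h_{N'}` leads to the first third of `J_m`. In a Chacon tower such a step changes the height
  of a coordinate in tower `N'` by at most one (`sp_succ`, `NFCseq.move_pure`). If `N' ≤ n_{ℓ_m-1}`,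
  gaps of height `h_b` lie above the copies of tower `n_{ℓ_m-1}`; up to bounded errors a gap
  behaves as one more copy of tower `b`, and one of the `d + 1` further moves by `r h_b`, `0 ≤ r ≤ d`,
  puts all `d` coordinates outside the gaps, since each coordinate excludes at most one `r`
  (`NFCseq.move_gap`). So every visit in `I_m` to a fixed box far enough from the edges of its tower is
  a translate, by one of boundedly many displacements, of a visit in `J_m` to that tower
  (`NFC.exists_return`, `NFC.card_le_card_return`), and `a > 0` follows.
-/

open MeasureTheory Set Filter Topology
open scoped ENNReal
open scoped Classical

noncomputable section

/-! ## The nearly finite Chacon transformation: symbolic model -/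

/-- The alphabet `{*} ∪ ℕ` is modelled by `Option ℕ`, `none` playing the role of `*`. -/
instance optionNatTop : TopologicalSpace (Option ℕ) := ⊥

/-- The data of the two sequences `(n_ℓ)` and `(ℓ_k)` used in the construction of the
nearly finite Chacon transformation, together with the growth conditions imposed on them. -/
structure NFCseq where
  nseq : ℕ → ℕ
  lseq : ℕ → ℕ
  nseq_zero : nseq 0 = 0
  lseq_zero : lseq 0 = 1
  lseq_strictMono : StrictMono lseq
  nseq_growth : ∀ ℓ : ℕ, 1 ≤ ℓ → nseq (ℓ - 1) + 2 * ℓ < nseq ℓ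
  lseq_growth : ∀ k : ℕ, (2 : ℝ) ≤ (1 + ((7 : ℝ) ^ k)⁻¹) ^ (lseq (k + 1) - lseq k)

namespace NFCseq

/-- `k(ℓ)`: the unique `k` with `ℓ_k ≤ ℓ < ℓ_{k+1}`. -/
def kOf (P : NFCseq) (ℓ : ℕ) : ℕ := sSup {k | P.lseq k ≤ ℓ}

/-- The heights `h_n` of the towers. -/
def hgt (P : NFCseq) : ℕ → ℕ
  | 0 => 1
  | n + 1 =>
    3 * P.hgt n +
      3 * (if hn : ∃ ℓ, 1 ≤ ℓ ∧ P.nseq ℓ = n then P.hgt (n - P.kOf (Nat.find hn)) else 0) + 1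
termination_by n => n
decreasing_by all_goals omega

theorem hgt_pos (P : NFCseq) (n : ℕ) : 0 < P.hgt n := by
  cases n with
  | zero => simp [hgt]
  | succ n => rw [hgt]; omega

/-- The number of spacers put above the first subcolumn at step `n+1`
(`h_{n-k(ℓ)}` if `n = n_ℓ`, and `0` otherwise). -/
def spa (P : NFCseq) (n : ℕ) : ℕ :=
  if hn : ∃ ℓ, 1 ≤ ℓ ∧ P.nseq ℓ = n then P.hgt (n - P.kOf (Nat.find hn)) else 0

/-- The map `p_n` sending the index of a level of tower `n+1` to the index of the level of
tower `n` containing it (`none` if that level lies outside tower `n`). -/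
def pmap (P : NFCseq) (n j : ℕ) : Option ℕ :=
  if j < P.hgt n then some j
  else if j < P.hgt n + P.spa n then none
  else if j < 2 * P.hgt n + P.spa n then some (j - (P.hgt n + P.spa n))
  else if j < 2 * P.hgt n + 2 * P.spa n + 1 then none
  else if j < 3 * P.hgt n + 2 * P.spa n + 1 then some (j - (2 * P.hgt n + 2 * P.spa n + 1))
  else none

/-- The defining property of points of the space `X`. -/
def Xspec (P : NFCseq) (x : ℕ → Option ℕ) : Prop :=
  (∀ n, x n = (x (n + 1)).bind (P.pmap n)) ∧ ∃ n, x n ≠ none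

/-- The space `X` of the symbolic model, with its product (subspace) topology. -/
abbrev Xpt (P : NFCseq) : Type := {x : ℕ → Option ℕ // P.Xspec x}

instance (P : NFCseq) : MeasurableSpace P.Xpt := borel _

/-- `L_n^j`, the `j`-th level of tower `n`. -/
def level (P : NFCseq) (n j : ℕ) : Set P.Xpt := {x | x.1 n = some j}

/-- `C_n`, the union of all levels of tower `n`. -/
def tower (P : NFCseq) (n : ℕ) : Set P.Xpt := {x | x.1 n ≠ none}

theorem pmap_zero (P : NFCseq) (n : ℕ) : P.pmap n 0 = some 0 := by
  unfold pmap
  simp [P.hgt_pos n]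

/-- The point `𝟎 = (0,0,…)`. -/
def zeroPt (P : NFCseq) : P.Xpt :=
  ⟨fun _ => some 0, fun n => by
    show some 0 = (some 0).bind (P.pmap n)
    simp [P.pmap_zero n], 0, by simp⟩

/-- `t_n(x) ∈ {1,2,3}`: the subcolumn of tower `n` to which `x` belongs
(junk value `0` if `x` is not in tower `n+1`). -/
def tcol (P : NFCseq) (n : ℕ) (x : P.Xpt) : ℕ :=
  match x.1 (n + 1) with
  | none => 0
  | some j =>
    if j < P.hgt n + P.spa n then 1
    else if j < 2 * P.hgt n + 2 * P.spa n + 1 then 2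
    else 3

/-- The index (from `0` to `3^(m-n) - 1`, ordered from bottom to top of tower `m`) of the
occurrence of tower `n` inside tower `m` to which `x` belongs. -/
def occIdx (P : NFCseq) (n m : ℕ) (x : P.Xpt) : ℕ :=
  ∑ r ∈ Finset.Ico n m, (P.tcol r x - 1) * 3 ^ (r - n)

/-- `x` belongs to one of the first hundred occurrences of tower `n` inside tower `m`. -/
def inFirstHundred (P : NFCseq) (n m : ℕ) (x : P.Xpt) : Prop := P.occIdx n m x < 100

/-- `x` belongs to one of the last hundred occurrences of tower `n` inside tower `m`. -/
def inLastHundred (P : NFCseq) (n m : ℕ) (x : P.Xpt) : Prop :=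
  3 ^ (m - n) ≤ P.occIdx n m x + 100

end NFCseq

/-- The nearly finite Chacon transformation `T` together with its invariant measure `μ`. -/
structure NFC extends NFCseq where
  T : toNFCseq.Xpt → toNFCseq.Xpt
  μ : Measure toNFCseq.Xpt
  T_inj : Function.Injective T
  T_range : Set.range T = {toNFCseq.zeroPt}ᶜ
  T_up : ∀ x : toNFCseq.Xpt, ∃ N : ℕ, ∀ n, N ≤ n →
    ∃ j : ℕ, x.1 n = some j ∧ (T x).1 n = some (j + 1)
  T_meas : Measurable T
  μ_level : ∀ n j : ℕ, j < toNFCseq.hgt n →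
    μ (toNFCseq.level n j) = (3 : ℝ≥0∞)⁻¹ ^ n
  μ_pres : MeasurePreserving T μ μ
  μ_sfin : SigmaFinite μ

namespace NFC

/-- `X^d`. -/
abbrev Xd (S : NFC) (d : ℕ) : Type := Fin d → S.toNFCseq.Xpt

/-- The Cartesian power `T^{×d}`. -/
def Td (S : NFC) (d : ℕ) : S.Xd d → S.Xd d := fun y i => S.T (y i)

/-- `C_n^d`. -/
def towerD (S : NFC) (d n : ℕ) : Set (S.Xd d) := {y | ∀ i, y i ∈ S.toNFCseq.tower n}

/-- `B` is an `n`-box. -/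
def IsNBox (S : NFC) (d n : ℕ) (B : Set (S.Xd d)) : Prop :=
  ∃ v : Fin d → ℕ, (∀ i, v i < S.toNFCseq.hgt n) ∧
    B = {y : S.Xd d | ∀ i, y i ∈ S.toNFCseq.level n (v i)}

/-- A measure on `X^d` is Radon iff it is finite on each `C_n^d`. -/
def IsRadon (S : NFC) (d : ℕ) (σ : Measure (S.Xd d)) : Prop :=
  ∀ n, σ (S.towerD d n) < ⊤

/-- `σ` is `T^{×d}`-invariant. -/
def InvariantD (S : NFC) (d : ℕ) (σ : Measure (S.Xd d)) : Prop :=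
  ∀ A : Set (S.Xd d), MeasurableSet A → σ ((S.Td d) ⁻¹' A) = σ A

/-- `T^{-e} A`, the preimage of `A` under `T^e` for `e ∈ ℤ` (image for negative `e`). -/
def preT (S : NFC) : ℤ → Set S.toNFCseq.Xpt → Set S.toNFCseq.Xpt
  | Int.ofNat k, A => S.T^[k] ⁻¹' A
  | Int.negSucc k, A => S.T^[k + 1] '' A

/-- `σ` is a graph measure arising from powers of `T` on `X^ι`:
`σ(∏ᵢ Aᵢ) = α · μ(⋂ᵢ T^{-eᵢ} Aᵢ)`. -/
def IsGraphMeasure (S : NFC) {ι : Type} (σ : Measure (ι → S.toNFCseq.Xpt)) : Prop :=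
  ∃ α : ℝ≥0∞, 0 < α ∧ α ≠ ⊤ ∧ ∃ e : ι → ℤ,
    ∀ A : ι → Set S.toNFCseq.Xpt, (∀ i, MeasurableSet (A i)) →
      σ (Set.univ.pi A) = α * S.μ (⋂ i, S.preT (e i) (A i))

/-- `σ = σ^{D_1} ⊗ ⋯ ⊗ σ^{D_r}` for a partition `D_1, …, D_r` of `{1,…,d}` where each
`σ^{D_j}` is a graph measure on `X^{D_j}` arising from powers of `T`. -/
def IsProductOfGraphMeasures (S : NFC) (d : ℕ) (σ : Measure (S.Xd d)) : Prop :=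
  ∃ (r : ℕ) (D : Fin r → Finset (Fin d)),
    (∀ j, (D j).Nonempty) ∧
    (∀ j j', j ≠ j' → Disjoint (D j) (D j')) ∧
    (∀ i : Fin d, ∃ j, i ∈ D j) ∧
    ∃ σD : ∀ j : Fin r, Measure ({i // i ∈ D j} → S.toNFCseq.Xpt),
      (∀ j, S.IsGraphMeasure (σD j)) ∧
      ∀ A : Fin d → Set S.toNFCseq.Xpt, (∀ i, MeasurableSet (A i)) →
        σ (Set.univ.pi A) =
          ∏ j : Fin r, σD j (Set.univ.pi fun i : {i // i ∈ D j} => A i.1)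

end NFC


/-- `(T)^j W` for `j ∈ ℤ`: forward images for `j ≥ 0`, preimages for `j < 0`. -/
def iterZ {α : Type*} (f : α → α) : ℤ → Set α → Set α
  | Int.ofNat k, A => f^[k] '' A
  | Int.negSucc k, A => f^[k + 1] ⁻¹' A

namespace NFC

/-- `σ` is totally dissipative: there is a wandering set `W` whose `ℤ`-orbit covers
`X^d` up to a `σ`-null set. -/
def TotallyDissipative (S : NFC) (d : ℕ) (σ : Measure (S.Xd d)) : Prop :=
  ∃ W : Set (S.Xd d), MeasurableSet W ∧
    (∀ j j' : ℤ, j ≠ j' → Disjoint (iterZ (S.Td d) j W) (iterZ (S.Td d) j' W)) ∧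
    σ (⋃ j : ℤ, iterZ (S.Td d) j W)ᶜ = 0

/-- The ring `𝓡` of finite unions of `n`-boxes. -/
def BoxRing (S : NFC) (d : ℕ) : Set (Set (S.Xd d)) :=
  {B | ∃ n : ℕ, ∃ 𝔅 : Finset (Set (S.Xd d)), (∀ b ∈ 𝔅, S.IsNBox d n b) ∧ B = ⋃₀ ↑𝔅}

/-- Convergence of a sequence of Radon measures on `X^d`. -/
def RTendsto (S : NFC) (d : ℕ) (σk : ℕ → Measure (S.Xd d)) (σ : Measure (S.Xd d)) : Prop :=
  ∀ n : ℕ, 0 < σ (S.towerD d n) →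
    (∀ᶠ k in atTop, 0 < σk k (S.towerD d n)) ∧
    ∀ B : Set (S.Xd d), S.IsNBox d n B →
      Tendsto (fun k => σk k B / σk k (S.towerD d n)) atTop
        (𝓝 (σ B / σ (S.towerD d n)))

/-- The edge `∂C_n^d` of `C_n^d`. -/
def edgeD (S : NFC) (d n : ℕ) : Set (S.Xd d) :=
  {y | y ∈ S.towerD d n ∧ ∃ i, y i ∈ S.toNFCseq.level n 0 ∨
    y i ∈ S.toNFCseq.level n (S.toNFCseq.hgt n - 1)}

/-- `Ω_m`: the union of all `m`-boxes `L_m^{j_1} × ⋯ × L_m^{j_d}` with `j_i ≠ 0` for all `i`. -/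
def OmegaD (S : NFC) (d m : ℕ) : Set (S.Xd d) :=
  {y | ∀ i, ∃ j : ℕ, j ≠ 0 ∧ j < S.toNFCseq.hgt m ∧ y i ∈ S.toNFCseq.level m j}

/-- A twisting transformation on `X^d`: it applies `T` to the coordinates in a nonempty
proper subset `G_1 ⊆ {1,…,d}` and the identity to the others. -/
def IsTwist (S : NFC) (d : ℕ) (Sw : S.Xd d → S.Xd d) : Prop :=
  ∃ G : Fin d → Bool, (∃ i, G i = true) ∧ (∃ i, G i = false) ∧
    ∀ (y : S.Xd d) (i : Fin d), Sw y i = if G i then S.T (y i) else y i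

/-- The empirical measure `γ_J = ∑_{j ∈ J} δ_{(T^{×d})^j x}` along a two-sided orbit `o`. -/
def emp (S : NFC) (d : ℕ) (o : ℤ → S.Xd d) (J : Finset ℤ) : Measure (S.Xd d) :=
  ∑ j ∈ J, Measure.dirac (o j)

end NFC

/-- `J` is a (nonempty finite) interval of `ℤ`. -/
def IsIntervalZ (J : Finset ℤ) : Prop := ∃ a b : ℤ, a ≤ b ∧ J = Finset.Icc a b

namespace NFC

/-- `J` is an `n`-crossing for the orbit `o` of a point of `X^d`: a maximal interval on which
the orbit stays in `C_n^d` with all the `t_n(T^j x_i)` constant. -/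
def IsCrossing (S : NFC) (d : ℕ) (o : ℤ → S.Xd d) (n : ℕ) (J : Finset ℤ) : Prop :=
  IsIntervalZ J ∧
  (∀ j ∈ J, o j ∈ S.towerD d n) ∧
  (∀ i : Fin d, ∀ j ∈ J, ∀ j' ∈ J, S.toNFCseq.tcol n (o j i) = S.toNFCseq.tcol n (o j' i)) ∧
  ∀ J' : Finset ℤ, J ⊆ J' → IsIntervalZ J' →
    (∀ j ∈ J', o j ∈ S.towerD d n) →
    (∀ i : Fin d, ∀ j ∈ J', ∀ j' ∈ J', S.toNFCseq.tcol n (o j i) = S.toNFCseq.tcol n (o j' i)) →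
    J' = J

/-- An `n`-crossing is synchronized if `t_n(T^j x_1) = ⋯ = t_n(T^j x_d)` on it. -/
def IsSync (S : NFC) (d : ℕ) (o : ℤ → S.Xd d) (n : ℕ) (J : Finset ℤ) : Prop :=
  ∀ j ∈ J, ∀ i i' : Fin d, S.toNFCseq.tcol n (o j i) = S.toNFCseq.tcol n (o j i')

end NFC

/-- The interval `I_n` of length `h_n` centered at `0`. -/
def Imid (P : NFCseq) (n : ℕ) : Finset ℤ :=
  Finset.Icc (-((P.hgt n / 2 : ℕ) : ℤ)) (-((P.hgt n / 2 : ℕ) : ℤ) + P.hgt n - 1)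

namespace NFC

/-- A substantial `n`-crossing: an `n`-crossing whose intersection with `I_n` has at least
`η·h_n` elements. -/
def IsSubstantial (S : NFC) (d : ℕ) (o : ℤ → S.Xd d) (η : ℝ) (n : ℕ) (J : Finset ℤ) : Prop :=
  S.IsCrossing d o n J ∧ η * S.toNFCseq.hgt n ≤ ((J ∩ Imid S.toNFCseq n).card : ℝ)

/-- `x_i` climbs into tower `n` along the interval `I`. -/
def Climbs (S : NFC) (d : ℕ) (o : ℤ → S.Xd d) (i : Fin d) (n : ℕ) (I : Finset ℤ) : Prop :=
  (∀ j ∈ I, (o j) i ∈ S.toNFCseq.tower n) ∧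
  ¬ ∃ j : ℤ, j ∈ I ∧ j + 1 ∈ I ∧
      (o j) i ∈ S.toNFCseq.level n (S.toNFCseq.hgt n - 1) ∧
      (o (j + 1)) i ∈ S.toNFCseq.level n 0

end NFC

/-- The nearly finite Chacon system together with the conull set `X_∞` and the function
`x ↦ ℓ(x)` of Lemma 2.3. -/
structure NFCX extends NFC where
  Xinf : Set toNFCseq.Xpt
  ellx : toNFCseq.Xpt → ℕ
  Xinf_conull : μ Xinfᶜ = 0
  Xinf_spec : ∀ x ∈ Xinf, ∀ ℓ : ℕ, ellx x ≤ ℓ → ∀ n : ℕ,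
    nseq (ℓ - 1) ≤ n → n + ℓ ≤ nseq ℓ →
      x ∈ toNFCseq.tower n ∧ ¬ toNFCseq.inFirstHundred n (nseq ℓ) x ∧
        ¬ toNFCseq.inLastHundred n (nseq ℓ) x

namespace NFCX

/-- `o` is the two-sided orbit of a `σ`-typical point `x = o 0` (satisfying
conditions (1), (2) and (3) of Section 3.4 of the paper). -/
def IsTypicalOrbit (S : NFCX) (d : ℕ) (σ : Measure (S.toNFC.Xd d))
    (o : ℤ → S.toNFC.Xd d) : Prop :=
  (∀ j : ℤ, S.toNFC.Td d (o j) = o (j + 1)) ∧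
  (∀ j : ℤ, ∀ n : ℕ, 0 < σ (S.toNFC.towerD d n) →
    ∀ B : Set (S.toNFC.Xd d), S.toNFC.IsNBox d n B →
    ∀ a b : ℕ → ℤ, (∀ k, a k ≤ 0) → (∀ k, 0 ≤ b k) →
      Tendsto (fun k => b k - a k) atTop atTop →
      Tendsto (fun k =>
          (((Finset.Icc (a k) (b k)).filter (fun j' => o (j + j') ∈ B)).card : ℝ) /
            (((Finset.Icc (a k) (b k)).filter
              (fun j' => o (j + j') ∈ S.toNFC.towerD d n)).card : ℝ))
        atTop (𝓝 ((σ B).toReal / (σ (S.toNFC.towerD d n)).toReal))) ∧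
  (∀ n : ℕ, ∀ B : Set (S.toNFC.Xd d), S.toNFC.IsNBox d n B → o 0 ∈ B → 0 < σ B) ∧
  (∀ i : Fin d, (o 0) i ∈ S.Xinf)

end NFCX

/-! ## Subsets of `ℤ` of order `ℓ` inside an interval -/

/-- A piece of `F ∩ I`: a maximal interval included in `F ∩ I`. -/
def IsPieceZ (F : Set ℤ) (I : Finset ℤ) (J : Finset ℤ) : Prop :=
  IsIntervalZ J ∧ (↑J : Set ℤ) ⊆ F ∩ ↑I ∧
    ∀ J' : Finset ℤ, IsIntervalZ J' → (↑J' : Set ℤ) ⊆ F ∩ ↑I → J ⊆ J' → J' = J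

/-- A hole of `F ∩ I`: a maximal interval included in `I \ F`. -/
def IsHoleZ (F : Set ℤ) (I : Finset ℤ) (J : Finset ℤ) : Prop :=
  IsIntervalZ J ∧ (↑J : Set ℤ) ⊆ (↑I : Set ℤ) \ F ∧
    ∀ J' : Finset ℤ, IsIntervalZ J' → (↑J' : Set ℤ) ⊆ (↑I : Set ℤ) \ F → J ⊆ J' → J' = J

/-- Each hole of `F ∩ I` has size at most `s`. -/
def HolesSmall (F : Set ℤ) (I : Finset ℤ) (s : ℕ) : Prop :=
  ∀ H : Finset ℤ, IsHoleZ F I H → H.card ≤ s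

/-- Two consecutive holes of `F ∩ I` are always separated by a piece of size at least `c`. -/
def HolesSeparated (F : Set ℤ) (I : Finset ℤ) (c : ℕ) : Prop :=
  ∀ H₁ H₂ : Finset ℤ, IsHoleZ F I H₁ → IsHoleZ F I H₂ →
    (∀ a ∈ H₁, ∀ b ∈ H₂, a < b) →
    ∃ J : Finset ℤ, IsPieceZ F I J ∧ c ≤ J.card ∧ ∀ a ∈ H₁, ∀ b ∈ H₂, ∀ x ∈ J, a < x ∧ x < b

/-- `F` is of order `ℓ ≥ 1` inside the interval `I`, with respect to the sequences `c`, `s`. -/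
def IsOrder (c s : ℕ → ℕ) : ℕ → Set ℤ → Finset ℤ → Prop
  | 0, _, _ => False
  | 1, F, I => HolesSmall F I (s 1) ∧ HolesSeparated F I (c 1)
  | (ℓ + 2), F, I => ∃ F' : Set ℤ, F ⊆ F' ∧ HolesSmall F' I (s (ℓ + 2)) ∧
      HolesSeparated F' I (c (ℓ + 2)) ∧
      ∀ J : Finset ℤ, IsPieceZ F' I J → IsOrder c s (ℓ + 1) F J

/-- `p_1`: the smallest integer such that `3^{p_1} > 2d+1` and `p_1 > d`. -/
def pOne (d : ℕ) : ℕ := sInf {p : ℕ | 2 * d + 1 < 3 ^ p ∧ d < p}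

/-- `p_2`: the smallest integer such that `1/3^{p_2} < η/3`. -/
def pTwo (η : ℝ) : ℕ := sInf {p : ℕ | ((3 : ℝ) ^ p)⁻¹ < η / 3}

/-! ### Counting spacers -/

/-- The number of single spacers lying below the block number `x` (counted from `0`) in the
fixed point of the Chacon substitution `B ↦ B B s B`: that block starts at height `x * H + sp x`
when the blocks have height `H`. -/
def sp (x : ℕ) : ℕ :=
  if x = 0 then 0 else x / 3 + sp (x / 3) + (if x % 3 = 2 then 1 else 0)
termination_by x
decreasing_by omega

theorem sp_zero : sp 0 = 0 := by rw [sp]; simp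

theorem sp_rec (u c : ℕ) (hc : c < 3) :
    sp (3 * u + c) = u + sp u + (if c = 2 then 1 else 0) := by
  by_cases h : 3 * u + c = 0
  · have hu : u = 0 := by omega
    have hc0 : c = 0 := by omega
    subst hu hc0
    simp [sp_zero]
  · rw [sp, if_neg h]
    have h1 : (3 * u + c) / 3 = u := by omega
    have h2 : (3 * u + c) % 3 = c := by omega
    rw [h1, h2]

theorem sp_one : sp 1 = 0 := by
  have := sp_rec 0 1 (by omega)
  simpa [sp_zero] using this

theorem sp_two : sp 2 = 1 := by
  have := sp_rec 0 2 (by omega)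
  simpa [sp_zero] using this

theorem sp_succ (x : ℕ) : sp x ≤ sp (x + 1) ∧ sp (x + 1) ≤ sp x + 1 := by
  induction x using Nat.strong_induction_on with
  | _ x ih =>
    obtain ⟨u, c, hc, rfl⟩ : ∃ u c, c < 3 ∧ x = 3 * u + c := ⟨x / 3, x % 3, by omega, by omega⟩
    have h0 := sp_rec u 0 (by omega)
    have h1 := sp_rec u 1 (by omega)
    have h2 := sp_rec u 2 (by omega)
    have h3 := sp_rec (u + 1) 0 (by omega)
    simp only [add_zero, if_true, show ¬ (0 = 2) by omega, show ¬ (1 = 2) by omega,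
      if_false, mul_add, mul_one] at h0 h1 h2 h3
    interval_cases c
    · simp only [add_zero]; omega
    · rw [show 3 * u + 1 + 1 = 3 * u + 2 by ring]; omega
    · have := ih u (by omega)
      rw [show 3 * u + 2 + 1 = 3 * u + 3 by ring]; omega

theorem sp_mono {x y : ℕ} (h : x ≤ y) : sp x ≤ sp y :=
  monotone_nat_of_le_succ (fun n => (sp_succ n).1) h

theorem sp_add_le (x r : ℕ) : sp (x + r) ≤ sp x + r := by
  induction r with
  | zero => simp
  | succ r ih => have := (sp_succ (x + r)).2; rw [← add_assoc]; omega

theorem sp_three_mul_pow (a : ℕ) : sp (3 ^ (a + 1)) = 3 ^ a + sp (3 ^ a) := by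
  have := sp_rec (3 ^ a) 0 (by omega)
  rw [pow_succ, mul_comm]; simpa using this

theorem two_sp_pow (a : ℕ) : 2 * sp (3 ^ a) + 1 = 3 ^ a := by
  induction a with
  | zero => simp [sp_one]
  | succ a ih => rw [sp_three_mul_pow, pow_succ]; omega

/-- Shifting by a power of `3` changes the spacer count by a constant, up to an error `1`:
this is the balance property that makes the Chacon pattern almost periodic. -/
theorem sp_add_pow (a x : ℕ) :
    sp x + sp (3 ^ a) ≤ sp (x + 3 ^ a) ∧ sp (x + 3 ^ a) ≤ sp x + sp (3 ^ a) + 1 := by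
  induction a generalizing x with
  | zero => simpa [sp_one] using sp_succ x
  | succ a ih =>
    obtain ⟨u, c, hc, rfl⟩ : ∃ u c, c < 3 ∧ x = 3 * u + c := ⟨x / 3, x % 3, by omega, by omega⟩
    have h1 := sp_rec u c hc
    have h2 := sp_rec (u + 3 ^ a) c hc
    have h3 := ih u
    rw [show 3 * u + c + 3 ^ (a + 1) = 3 * (u + 3 ^ a) + c by ring, h1, h2, sp_three_mul_pow]
    omega

theorem sp_split (c x : ℕ) (hx : x < 3 ^ c) :
    sp (3 ^ c + x) = sp (3 ^ c) + sp x ∧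
      sp (2 * 3 ^ c + x) = 2 * sp (3 ^ c) + 1 + sp x := by
  induction c generalizing x with
  | zero =>
    have : x = 0 := by simpa using hx
    subst this
    simp [sp_one, sp_two, sp_zero]
  | succ c ih =>
    obtain ⟨u, r, hr, rfl⟩ : ∃ u c, c < 3 ∧ x = 3 * u + c := ⟨x / 3, x % 3, by omega, by omega⟩
    have hu := ih u (by rw [pow_succ] at hx; omega)
    have h1 := sp_rec u r hr
    have h2 := sp_rec (3 ^ c + u) r hr
    have h3 := sp_rec (2 * 3 ^ c + u) r hr
    rw [show 3 ^ (c + 1) + (3 * u + r) = 3 * (3 ^ c + u) + r by ring,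
      show 2 * 3 ^ (c + 1) + (3 * u + r) = 3 * (2 * 3 ^ c + u) + r by ring, h1, h2, h3,
      sp_three_mul_pow]
    omega

/-! ### Positions of a tower inside a higher tower -/

namespace NFCseq

variable (P : NFCseq)

theorem hgt_succ (n : ℕ) : P.hgt (n + 1) = 3 * P.hgt n + 3 * P.spa n + 1 := by
  rw [hgt, spa]

theorem hgt_lt_succ (n : ℕ) : P.hgt n < P.hgt (n + 1) := by rw [hgt_succ]; omega

theorem hgt_strictMono : StrictMono P.hgt := strictMono_nat_of_lt_succ P.hgt_lt_succ

theorem hgt_mono {n m : ℕ} (h : n ≤ m) : P.hgt n ≤ P.hgt m := P.hgt_strictMono.monotone h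

theorem spa_le (n : ℕ) : P.spa n ≤ P.hgt n := by
  unfold spa
  split_ifs
  · exact P.hgt_mono (Nat.sub_le _ _)
  · exact Nat.zero_le _

theorem hgt_succ_le (n : ℕ) : P.hgt (n + 1) ≤ 7 * P.hgt n := by
  have := P.spa_le n
  have := P.hgt_pos n
  rw [hgt_succ]; omega

theorem hgt_add_le (n c : ℕ) : P.hgt (n + c) ≤ 7 ^ c * P.hgt n := by
  induction c with
  | zero => simp
  | succ c ih =>
    calc P.hgt (n + c + 1) ≤ 7 * P.hgt (n + c) := P.hgt_succ_le _
      _ ≤ 7 * (7 ^ c * P.hgt n) := by gcongr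
      _ = _ := by ring

theorem le_hgt_add (n c : ℕ) : 3 ^ c * P.hgt n ≤ P.hgt (n + c) := by
  induction c with
  | zero => simp
  | succ c ih =>
    have := P.hgt_succ (n + c)
    rw [← add_assoc, pow_succ]; nlinarith

/-- The index of the level of tower `n` containing level `j` of tower `n + c`. -/
def dn (n : ℕ) : ℕ → ℕ → Option ℕ
  | 0, j => some j
  | c + 1, j => (P.pmap (n + c) j).bind (dn n c)

theorem pmap_some_iff (n z v : ℕ) : P.pmap n z = some v ↔ v < P.hgt n ∧
    (z = v ∨ z = P.hgt n + P.spa n + v ∨ z = 2 * P.hgt n + 2 * P.spa n + 1 + v) := by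
  unfold pmap
  split_ifs <;> simp only [Option.some.injEq, false_iff] <;> omega

theorem dn_bound {n c j v : ℕ} (hj : j < P.hgt (n + c)) (h : P.dn n c j = some v) :
    v < P.hgt n ∧ v ≤ j ∧ j + P.hgt n ≤ P.hgt (n + c) + v := by
  induction c generalizing j with
  | zero => simp only [dn, Option.some.injEq, add_zero] at h hj ⊢; omega
  | succ c ih =>
    rw [dn, Option.bind_eq_some_iff] at h
    obtain ⟨w, hw, hv⟩ := h
    rw [pmap_some_iff] at hw
    have := ih hw.1 hv
    have := P.hgt_succ (n + c)
    rw [← add_assoc]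
    omega

/-- Inside an occurrence of tower `n`, one can move up and down freely. -/
theorem dn_shift {n c j v j' v' : ℕ} (hj : j < P.hgt (n + c)) (h : P.dn n c j = some v)
    (hv' : v' < P.hgt n) (hjj : j' + v = j + v') : P.dn n c j' = some v' := by
  induction c generalizing j j' with
  | zero => simp [dn] at h ⊢; omega
  | succ c ih =>
    rw [dn, Option.bind_eq_some_iff] at h ⊢
    obtain ⟨w, hw, hv⟩ := h
    rw [pmap_some_iff] at hw
    have := P.dn_bound hw.1 hv
    refine ⟨w + v' - v, ?_, ih hw.1 hv (by omega)⟩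
    rw [pmap_some_iff]
    omega

theorem dn_comp (n c c' j : ℕ) :
    P.dn n (c + c') j = (P.dn (n + c) c' j).bind (P.dn n c) := by
  induction c' generalizing j with
  | zero => simp [dn]
  | succ c' ih =>
    rw [← add_assoc, dn, dn, Option.bind_assoc, add_assoc]
    congr 1
    funext w
    exact ih w

/-- Height of a tower above a Chacon base: block `b`, with its spacers counted in. -/
theorem hgt_chacon {b c : ℕ} (hs : ∀ n, b < n → n < b + c → P.spa n = 0) (hc : 1 ≤ c) :
    P.hgt (b + c) = 3 ^ c * (P.hgt b + P.spa b) + sp (3 ^ c) := by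
  induction c, hc using Nat.le_induction with
  | base =>
    have := two_sp_pow 1
    rw [hgt_succ]; omega
  | succ c hc ih =>
    have h1 := ih fun n h1 h2 => hs n h1 (by omega)
    have h2 := two_sp_pow c
    have h3 := two_sp_pow (c + 1)
    rw [← add_assoc, hgt_succ, hs (b + c) (by omega) (by omega), h1]
    have h4 : (3:ℕ) ^ (c + 1) = 3 * 3 ^ c := by ring
    rw [h4, mul_assoc]
    rw [h4] at h3
    omega

theorem start_lt {b c x ρ : ℕ} (hx : x < 3 ^ c) (hρ : ρ < P.hgt b) :
    x * (P.hgt b + P.spa b) + sp x + ρ < 3 ^ c * (P.hgt b + P.spa b) + sp (3 ^ c) := by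
  have h1 : (x + 1) * (P.hgt b + P.spa b) ≤ 3 ^ c * (P.hgt b + P.spa b) :=
    Nat.mul_le_mul_right _ hx
  have h2 := sp_mono hx.le
  rw [add_mul] at h1
  omega

/-- In a Chacon tower based on tower `b`, the `b`-level is read off from the number `x` of the
block and the offset `ρ` in it. Spacers above the subcolumns of tower `b` itself are allowed and
are counted in the height of the block. -/
theorem dn_of {b c x ρ z : ℕ} (hs : ∀ n, b < n → n < b + c → P.spa n = 0) (hx : x < 3 ^ c)
    (hρ : ρ < P.hgt b) (hz : z = x * (P.hgt b + P.spa b) + sp x + ρ) :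
    P.dn b c z = some ρ := by
  induction c generalizing x z with
  | zero =>
    have : x = 0 := by simpa using hx
    subst this
    simp [dn, hz, sp_zero]
  | succ c ih =>
    have hs' : ∀ n, b < n → n < b + c → P.spa n = 0 := fun n h1 h2 => hs n h1 (by omega)
    obtain ⟨u, x0, hx0, rfl⟩ : ∃ u x0, x0 < 3 ^ c ∧ x = u * 3 ^ c + x0 :=
      ⟨x / 3 ^ c, x % 3 ^ c, Nat.mod_lt _ (by positivity), (Nat.div_add_mod' x _).symm⟩
    have hu : u < 3 := by
      by_contra! hu
      have : 3 * 3 ^ c ≤ u * 3 ^ c := Nat.mul_le_mul_right _ hu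
      rw [pow_succ] at hx; omega
    rw [dn, Option.bind_eq_some_iff]
    refine ⟨x0 * (P.hgt b + P.spa b) + sp x0 + ρ, ?_, ih hs' hx0 rfl⟩
    have hlt := P.start_lt hx0 hρ
    have hsplit := sp_split c x0 hx0
    rw [pmap_some_iff]
    rcases Nat.eq_zero_or_pos c with rfl | hc
    · have : x0 = 0 := by simpa using hx0
      subst this
      simp only [add_zero, pow_zero, mul_one, zero_mul, sp_zero, zero_add] at *
      refine ⟨hρ, ?_⟩
      interval_cases u <;> simp [sp_zero, sp_one, sp_two] at hz <;> omega
    · have hh := P.hgt_chacon hs' hc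
      rw [hs (b + c) (by omega) (by omega), hh]
      refine ⟨hlt, ?_⟩
      rw [add_mul] at hz
      interval_cases u
      · simp at hz; left; simpa using hz
      · simp only [one_mul] at hz; omega
      · rw [hsplit.2, mul_assoc] at hz; omega

/-- Converse of `dn_of`: every point of tower `b` is at some offset in some block. -/
theorem dn_inv {b c z ρ : ℕ} (hs : ∀ n, b < n → n < b + c → P.spa n = 0)
    (h : P.dn b c z = some ρ) :
    ∃ x, x < 3 ^ c ∧ z = x * (P.hgt b + P.spa b) + sp x + ρ := by
  induction c generalizing z with
  | zero => exact ⟨0, by simp, by simpa [dn, sp_zero] using h⟩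
  | succ c ih =>
    have hs' : ∀ n, b < n → n < b + c → P.spa n = 0 := fun n h1 h2 => hs n h1 (by omega)
    rw [dn, Option.bind_eq_some_iff] at h
    obtain ⟨w, hw, hv⟩ := h
    obtain ⟨x0, hx0, hwx⟩ := ih hs' hv
    rw [pmap_some_iff] at hw
    have hsplit := sp_split c x0 hx0
    have h3 : (3:ℕ) ^ (c + 1) = 3 * 3 ^ c := by ring
    rcases Nat.eq_zero_or_pos c with rfl | hc
    · have : x0 = 0 := by simpa using hx0
      subst this
      simp only [add_zero, zero_mul, sp_zero, zero_add] at *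
      subst hwx
      rcases hw.2 with hw | hw | hw
      · exact ⟨0, by simp, by simp [hw, sp_zero]⟩
      · exact ⟨1, by simp, by simp [hw, sp_one]⟩
      · exact ⟨2, by simp, by simp only [hw, sp_two]; ring⟩
    · have hh := P.hgt_chacon hs' hc
      rw [hs (b + c) (by omega) (by omega), hh] at hw
      rcases hw.2 with hw | hw | hw
      · exact ⟨x0, by omega, by omega⟩
      · refine ⟨3 ^ c + x0, by omega, ?_⟩
        rw [add_mul, hsplit.1]; omega
      · refine ⟨2 * 3 ^ c + x0, by omega, ?_⟩
        rw [add_mul, hsplit.2, mul_assoc]; omega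

end NFCseq

/-! ### Moving along the block structure of a tower -/

/-- Height `z` lies at offset `ρ` from the start of the block number `y` of the `X`-th
extended tower. Here a *block* has height `h`; an extended tower consists of the `3 ^ k`
blocks `0, …, 3 ^ k - 1` of a pure Chacon tower followed by a gap of height exactly `h`
(the *block* number `3 ^ k`), so that its height is `H = (3 ^ k + 1) * h + sp (3 ^ k)`. -/
def Vir (h H : ℤ) (k X y : ℕ) (ρ z : ℤ) : Prop :=
  y ≤ 3 ^ k ∧ z = X * H + sp X + y * h + sp y + ρ

/-- Moving up by the height `3 ^ a * h + sp (3 ^ a)` of an intermediate tower changes the offset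
by at most `2`. A gap has the height of a block, so crossing one only renumbers the blocks. -/
theorem vir_up {h H : ℤ} {k X y : ℕ} {ρ z : ℤ} (hH : H = 3 ^ k * h + h + sp (3 ^ k))
    (hv : Vir h H k X y ρ z) {a : ℕ} (ha : a ≤ k) :
    ∃ X' y' ρ', |ρ' - ρ| ≤ 2 ∧ Vir h H k X' y' ρ' (z + (3 ^ a * h + sp (3 ^ a))) := by
  obtain ⟨hy, hz⟩ := hv
  have hpow : 3 ^ a ≤ 3 ^ k := Nat.pow_le_pow_right (by omega) ha
  have e1 := sp_add_pow a y
  by_cases hc : y + 3 ^ a ≤ 3 ^ k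
  · refine ⟨X, y + 3 ^ a, ρ + sp (3 ^ a) + sp y - sp (y + 3 ^ a), ?_, hc, ?_⟩
    · rw [abs_le]; constructor <;> omega
    · rw [hz]; push_cast; ring
  · obtain ⟨y', hy'⟩ : ∃ y', y + 3 ^ a = y' + 1 + 3 ^ k := ⟨y + 3 ^ a - 1 - 3 ^ k, by omega⟩
    have e2 := sp_add_pow k (y' + 1)
    have e3 := sp_succ y'
    have e4 := sp_succ X
    rw [hy'] at e1
    refine ⟨X + 1, y', ρ + sp X + sp y + sp (3 ^ a) - sp (X + 1) - sp (3 ^ k) - sp y',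
      ?_, by omega, ?_⟩
    · rw [abs_le]; constructor <;> omega
    · have : (y : ℤ) = y' + 1 + 3 ^ k - 3 ^ a := by
        have : (y : ℤ) + 3 ^ a = y' + 1 + 3 ^ k := by exact_mod_cast hy'
        linarith
      rw [hz, hH, this]; push_cast; ring

theorem vir_down {h H : ℤ} {k X y : ℕ} {ρ z : ℤ} (hH : H = 3 ^ k * h + h + sp (3 ^ k))
    (hρ : ρ < h) (h0 : 0 ≤ h)
    (hv : Vir h H k X y ρ z) {a : ℕ} (ha : a ≤ k) (hz0 : 0 ≤ z - (3 ^ a * h + sp (3 ^ a))) :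
    ∃ X' y' ρ', |ρ' - ρ| ≤ 2 ∧ Vir h H k X' y' ρ' (z - (3 ^ a * h + sp (3 ^ a))) := by
  obtain ⟨hy, hz⟩ := hv
  have hpow : 3 ^ a ≤ 3 ^ k := Nat.pow_le_pow_right (by omega) ha
  by_cases hc : 3 ^ a ≤ y
  · obtain ⟨y', rfl⟩ := Nat.exists_eq_add_of_le' hc
    have e1 := sp_add_pow a y'
    refine ⟨X, y', ρ + sp (y' + 3 ^ a) - sp (3 ^ a) - sp y', ?_,
      (Nat.le_add_right _ _).trans hy, ?_⟩
    · rw [abs_le]; constructor <;> omega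
    · rw [hz]; push_cast; ring
  · push Not at hc
    obtain ⟨X', rfl⟩ : ∃ X', X = X' + 1 := by
      refine Nat.exists_eq_succ_of_ne_zero ?_
      rintro rfl
      have h1 : ((y : ℤ) + 1) * h ≤ 3 ^ a * h :=
        mul_le_mul_of_nonneg_right (by exact_mod_cast hc) h0
      have h2 := sp_mono hc.le
      simp only [sp_zero, Nat.cast_zero, zero_mul, zero_add] at hz
      nlinarith
    obtain ⟨y', hy'⟩ : ∃ y', y + 1 + 3 ^ k = y' + 3 ^ a := ⟨y + 1 + 3 ^ k - 3 ^ a, by omega⟩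
    have e1 := sp_add_pow a y'
    have e2 := sp_add_pow k (y + 1)
    have e3 := sp_succ y
    have e4 := sp_succ X'
    rw [← hy'] at e1
    refine ⟨X', y', ρ + sp (X' + 1) - sp X' + sp (3 ^ k) + sp y - sp (3 ^ a) - sp y',
      ?_, by omega, ?_⟩
    · rw [abs_le]; constructor <;> omega
    · have : (y' : ℤ) = y + 1 + 3 ^ k - 3 ^ a := by
        have : (y : ℤ) + 1 + 3 ^ k = y' + 3 ^ a := by exact_mod_cast hy'
        linarith
      rw [hz, hH, this]; push_cast; ring

theorem vir_iter {h H : ℤ} {k X y : ℕ} {ρ z : ℤ} (hH : H = 3 ^ k * h + h + sp (3 ^ k))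
    (h0 : 0 ≤ h) {a : ℕ} (ha : a ≤ k) (q : ℕ) (hρ : ρ + 2 * q < h)
    (hv : Vir h H k X y ρ z) (s : ℤ) (hs : s = 1 ∨ s = -1)
    (hz0 : 0 ≤ z + s * q * (3 ^ a * h + sp (3 ^ a))) :
    ∃ X' y' ρ', |ρ' - ρ| ≤ 2 * q ∧
      Vir h H k X' y' ρ' (z + s * q * (3 ^ a * h + sp (3 ^ a))) := by
  induction q with
  | zero => exact ⟨X, y, ρ, by simp, by simpa using hv⟩
  | succ q ih =>
    have hpos : (0:ℤ) ≤ 3 ^ a * h + sp (3 ^ a) := by positivity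
    push_cast at hρ hz0 ⊢
    obtain rfl | rfl := hs
    · obtain ⟨X', y', ρ', hb, hv'⟩ : ∃ X' y' ρ', |ρ' - ρ| ≤ 2 * q ∧
          Vir h H k X' y' ρ' (z + 1 * q * (3 ^ a * h + sp (3 ^ a))) := by
        clear ih hz0
        induction q with
        | zero => exact ⟨X, y, ρ, by simp, by simpa using hv⟩
        | succ q ih =>
          obtain ⟨X', y', ρ', hb, hv'⟩ := ih (by push_cast at hρ; linarith)
          obtain ⟨X'', y'', ρ'', hb', hv''⟩ := vir_up hH hv' ha
          refine ⟨X'', y'', ρ'', ?_, ?_⟩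
          · rw [abs_le] at *; push_cast; constructor <;> linarith
          · convert hv'' using 1; push_cast; ring
      obtain ⟨X'', y'', ρ'', hb', hv''⟩ := vir_up hH hv' ha
      refine ⟨X'', y'', ρ'', ?_, ?_⟩
      · rw [abs_le] at *; constructor <;> linarith
      · convert hv'' using 1; ring
    · obtain ⟨X', y', ρ', hb, hv'⟩ := ih (by linarith) (by linarith)
      obtain ⟨X'', y'', ρ'', hb', hv''⟩ := vir_down hH
        (by rw [abs_le] at hb; linarith) h0 hv' ha (by linarith)
      refine ⟨X'', y'', ρ'', ?_, ?_⟩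
      · rw [abs_le] at *; constructor <;> linarith
      · convert hv'' using 1; ring

/-- Moving up by `r` blocks, with `r ≤ 3 ^ k`: one falls into a gap for one value of `r` only. -/
theorem vir_small {h H : ℤ} {k X y : ℕ} {ρ z : ℤ} (hH : H = 3 ^ k * h + h + sp (3 ^ k))
    (hv : Vir h H k X y ρ z) {r : ℕ} (hr : r ≤ 3 ^ k) (hne : r ≠ 3 ^ k - y) :
    ∃ X' y' ρ', y' < 3 ^ k ∧ |ρ' - ρ| ≤ r + 3 ∧ Vir h H k X' y' ρ' (z + r * h) := by
  obtain ⟨hy, hz⟩ := hv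
  have e1 := sp_add_le y r
  have e0 := sp_mono (Nat.le_add_right y r)
  by_cases hc : y + r < 3 ^ k
  · refine ⟨X, y + r, ρ + sp y - sp (y + r), hc, ?_, hc.le, ?_⟩
    · rw [abs_le]; constructor <;> omega
    · rw [hz]; push_cast; ring
  · obtain ⟨y', hy'⟩ : ∃ y', y + r = y' + 1 + 3 ^ k := ⟨y + r - 1 - 3 ^ k, by omega⟩
    have e2 := sp_add_pow k (y' + 1)
    have e3 := sp_succ y'
    have e4 := sp_succ X
    rw [hy'] at e1 e0
    refine ⟨X + 1, y', ρ + sp X + sp y - sp (X + 1) - sp (3 ^ k) - sp y',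
      by omega, ?_, by omega, ?_⟩
    · rw [abs_le]; constructor <;> omega
    · have : (y : ℤ) = y' + 1 + 3 ^ k - r := by
        have : (y : ℤ) + r = y' + 1 + 3 ^ k := by exact_mod_cast hy'
        linarith
      rw [hz, hH, this]; push_cast; ring

namespace NFCseq

variable (P : NFCseq)

theorem hgt_pure {b c : ℕ} (hs : ∀ n, b ≤ n → n < b + c → P.spa n = 0) :
    P.hgt (b + c) = 3 ^ c * P.hgt b + sp (3 ^ c) := by
  rcases Nat.eq_zero_or_pos c with rfl | hc
  · simp [sp_one]
  · have := P.hgt_chacon (fun n h1 h2 => hs n h1.le h2) hc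
    rwa [hs b le_rfl (by omega), add_zero] at this

/-- Moving by `q` tower heights inside a pure Chacon tower of base `N`. -/
theorem move_pure {N c z z' τ Q : ℕ} {q : ℤ} (hs : ∀ n, N ≤ n → n < N + c → P.spa n = 0)
    (h : P.dn N c z = some τ) (hτ : Q ≤ τ) (hτ' : τ + Q < P.hgt N)
    (hq : |q| ≤ Q) (hz : (z' : ℤ) = z + q * P.hgt N) (hzL : z' < P.hgt (N + c)) :
    ∃ τ' : ℕ, P.dn N c z' = some τ' ∧ |(τ' : ℤ) - τ| ≤ Q := by
  rcases Nat.eq_zero_or_pos c with rfl | hc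
  · -- with no room to move, `q = 0`
    simp only [dn, Option.some.injEq, add_zero] at h hzL ⊢
    subst h
    have hq0 : q = 0 := by
      by_contra hne
      rcases lt_or_gt_of_ne hne with h1 | h1
      · nlinarith
      · nlinarith
    subst hq0
    exact ⟨z', rfl, by simp at hz; simp [hz]⟩
  have hN0 : P.spa N = 0 := hs N le_rfl (by omega)
  have hs' : ∀ n, N < n → n < N + c → P.spa n = 0 := fun n h1 h2 => hs n h1.le h2
  obtain ⟨x, hx, hzx⟩ := P.dn_inv hs' h
  have hL := P.hgt_pure hs
  rw [hN0, add_zero] at hzx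
  have fin : ∀ x' τ' : ℕ, z' = x' * P.hgt N + sp x' + τ' → τ' < P.hgt N →
      P.dn N c z' = some τ' := by
    intro x' τ' h1 h2
    refine P.dn_of hs' ?_ h2 (by rw [hN0, add_zero]; exact h1)
    by_contra! hge
    have h3 := Nat.mul_le_mul_right (P.hgt N) hge
    have h4 := sp_mono hge
    omega
  rw [abs_le] at hq
  obtain ⟨q', rfl | rfl⟩ := Int.eq_nat_or_neg q
  · have e1 := sp_add_le x q'
    have e0 := sp_mono (Nat.le_add_right x q')
    refine ⟨τ + sp x - sp (x + q'), fin (x + q') _ ?_ (by omega), ?_⟩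
    · zify [show sp (x + q') ≤ τ + sp x by omega]
      rw [hz, hzx]; push_cast; ring
    · rw [abs_le]; omega
  · have hqx : q' ≤ x := by
      by_contra! hlt
      have h3 := Nat.mul_le_mul_right (P.hgt N) (show x + 1 ≤ q' from hlt)
      have h4 := sp_add_le 0 x
      rw [zero_add, sp_zero, zero_add] at h4
      zify at h3 h4 hzx hτ'
      have : (0:ℤ) ≤ z' := by positivity
      rw [hz, hzx] at this
      have : (x:ℤ) < q' := by exact_mod_cast hlt
      linarith
    obtain ⟨x', rfl⟩ := Nat.exists_eq_add_of_le' hqx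
    have e1 := sp_add_le x' q'
    have e0 := sp_mono (Nat.le_add_right x' q')
    refine ⟨τ + sp (x' + q') - sp x', fin x' _ ?_ (by omega), ?_⟩
    · zify [show sp x' ≤ τ + sp (x' + q') by omega]
      rw [hz, hzx]; push_cast; ring
    · rw [abs_le]; omega

/-- Moving by `q * h_N + r * h_b` when gaps of height `h_b` are inserted between the copies
of tower `b + k`: all values of `r` but one lead to a point at about the same offset in tower
`b`. -/
theorem move_gap {b k c a z ρ Q : ℕ} {q : ℤ} (hs : ∀ n, b ≤ n → n < b + k → P.spa n = 0)
    (he : P.spa (b + k) = P.hgt b)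
    (hs' : ∀ n, b + k < n → n < b + k + c → P.spa n = 0) (hc : 1 ≤ c) (ha : a ≤ k)
    (hzL : z < P.hgt (b + k + c))
    (h : P.dn b (k + c) z = some ρ) (hρ' : ρ + 2 * Q < P.hgt b)
    (hq : |q| ≤ Q) (hz0 : 0 ≤ z + q * P.hgt (b + a)) :
    ∃ bad : ℕ, ∀ r, r ≤ 3 ^ k → r ≠ bad → 2 * Q + r + 3 ≤ ρ → ρ + 2 * Q + r + 3 < P.hgt b →
      ∀ z' : ℕ, (z' : ℤ) = z + q * P.hgt (b + a) + r * P.hgt b → z' < P.hgt (b + k + c) →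
      ∃ ρ' : ℕ, P.dn b (k + c) z' = some ρ' ∧ |(ρ' : ℤ) - ρ| ≤ 2 * Q + r + 3 := by
  have hsb : ∀ n, b < n → n < b + k → P.spa n = 0 := fun n h1 h2 => hs n h1.le h2
  have hhe := P.hgt_pure hs
  have hha : P.hgt (b + a) = 3 ^ a * P.hgt b + sp (3 ^ a) :=
    P.hgt_pure fun n h1 h2 => hs n h1 (by omega)
  have hL := P.hgt_chacon hs' hc
  -- for `k = 0` the tower `b` is itself followed by a gap, so `spa b` need not vanish
  have hkb : ∀ y : ℕ, y < 3 ^ k → y * (P.hgt b + P.spa b) = y * P.hgt b := by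
    intro y hy
    rcases Nat.eq_zero_or_pos k with rfl | hk
    · have : y = 0 := by simpa using hy
      simp [this]
    · rw [hs b le_rfl (by omega), add_zero]
  set H : ℕ := P.hgt (b + k) + P.spa (b + k) with hHdef
  have hH : (H : ℤ) = 3 ^ k * P.hgt b + P.hgt b + sp (3 ^ k) := by
    rw [hHdef, hhe, he]; push_cast; ring
  rw [P.dn_comp, Option.bind_eq_some_iff] at h
  obtain ⟨τ, hτ, hρ⟩ := h
  obtain ⟨X, hX, hzX⟩ := P.dn_inv hs' hτ
  obtain ⟨y, hy, hτy⟩ := P.dn_inv hsb hρ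
  rw [← hHdef] at hzX
  rw [hkb y hy] at hτy
  have hv : Vir (P.hgt b) H k X y ρ z := by
    refine ⟨hy.le, ?_⟩
    rw [hzX, hτy]; push_cast; ring
  obtain ⟨X1, y1, ρ1, hρ1, hv1⟩ : ∃ (X' y' : ℕ) (ρ' : ℤ), |ρ' - ρ| ≤ 2 * (Q : ℤ) ∧
      Vir (P.hgt b) H k X' y' ρ' (z + q * P.hgt (b + a)) := by
    rw [hha] at hz0 ⊢
    push_cast at hz0 ⊢
    rw [abs_le] at hq
    obtain ⟨q', rfl | rfl⟩ := Int.eq_nat_or_neg q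
    · obtain ⟨X', y', ρ', h1, h2⟩ := vir_iter hH (by positivity) ha q' (by omega) hv 1
        (Or.inl rfl) (by simpa using hz0)
      exact ⟨X', y', ρ', h1.trans (by omega), by simpa using h2⟩
    · obtain ⟨X', y', ρ', h1, h2⟩ := vir_iter hH (by positivity) ha q' (by omega) hv (-1)
        (Or.inr rfl) (by simpa using hz0)
      exact ⟨X', y', ρ', h1.trans (by omega), by simpa using h2⟩
  refine ⟨3 ^ k - y1, fun r hr hne hr1 hr2 z' hz' hz'L => ?_⟩
  obtain ⟨X2, y2, ρ2, hy2, hρ2, -, hv2⟩ := vir_small hH hv1 hr hne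
  rw [← hz'] at hv2
  rw [abs_le] at hρ1 hρ2
  obtain ⟨ρ', rfl⟩ := Int.eq_ofNat_of_zero_le (show 0 ≤ ρ2 by omega)
  refine ⟨ρ', ?_, by rw [abs_le]; omega⟩
  have hv3 : z' = X2 * H + sp X2 + (y2 * P.hgt b + sp y2 + ρ') := by
    zify; rw [hv2]; ring
  have hρ'b : ρ' < P.hgt b := by omega
  have hlt := P.start_lt hy2 hρ'b
  have e1 := hkb y2 hy2
  rw [P.dn_comp, Option.bind_eq_some_iff]
  refine ⟨y2 * P.hgt b + sp y2 + ρ', P.dn_of hs' ?_ ?_ hv3, P.dn_of hsb hy2 hρ'b (by rw [e1])⟩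
  · by_contra! hge
    have h3 := Nat.mul_le_mul_right H hge
    have h4 := sp_mono hge
    omega
  · rw [hhe]
    have h3 := Nat.mul_le_mul_right (P.hgt b) (show y2 + 1 ≤ 3 ^ k from hy2)
    have h4 := sp_mono hy2.le
    rw [add_mul] at h3
    omega

end NFCseq

/-! ### Heights along orbits -/

namespace NFCseq

variable {P : NFCseq}

theorem Xpt.coord (y : P.Xpt) (n c : ℕ) : y.1 n = (y.1 (n + c)).bind (P.dn n c) := by
  induction c with
  | zero => cases y.1 n <;> simp [dn]
  | succ c ih =>
    rw [ih, y.2.1 (n + c), ← add_assoc]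
    cases y.1 (n + c + 1) <;> simp [dn]

theorem Xpt.coord_of {y : P.Xpt} {n c z v : ℕ} (hz : y.1 (n + c) = some z)
    (hv : P.dn n c z = some v) : y.1 n = some v := by
  rw [y.coord n c, hz]; exact hv

theorem Xpt.dn_of_coord {y : P.Xpt} {n c z v : ℕ} (hz : y.1 (n + c) = some z)
    (hv : y.1 n = some v) : P.dn n c z = some v := by
  rw [y.coord n c, hz] at hv; exact hv

theorem Xpt.lt_hgt {y : P.Xpt} {n v : ℕ} (hv : y.1 n = some v) : v < P.hgt n := by
  rw [y.2.1 n, Option.bind_eq_some_iff] at hv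
  obtain ⟨z, -, hz⟩ := hv
  exact ((P.pmap_some_iff n z v).1 hz).1

theorem Xpt.exists_coord {y : P.Xpt} {n m v : ℕ} (hv : y.1 n = some v) (h : n ≤ m) :
    ∃ z, y.1 m = some z := by
  obtain ⟨c, rfl⟩ := Nat.exists_eq_add_of_le h
  rw [y.coord n c, Option.bind_eq_some_iff] at hv
  exact ⟨_, hv.choose_spec.1⟩

theorem tcol_eq {y : P.Xpt} {n z : ℕ} (h : y.1 (n + 1) = some z) :
    P.tcol n y = if z < P.hgt n + P.spa n then 1
    else if z < 2 * P.hgt n + 2 * P.spa n + 1 then 2 else 3 := by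
  unfold tcol
  rw [h]

end NFCseq

namespace NFC

variable {S : NFC}

theorem T_both (y : S.toNFCseq.Xpt) (n : ℕ) : ∃ c j : ℕ, y.1 (n + c) = some j ∧
    (S.T y).1 (n + c) = some (j + 1) := by
  obtain ⟨N, hN⟩ := S.T_up y
  obtain ⟨j, h1, h2⟩ := hN (n + N) (by omega)
  exact ⟨N, j, h1, h2⟩

theorem T_succ {y : S.toNFCseq.Xpt} {n z : ℕ} (hz : y.1 n = some z)
    (hlt : z + 1 < S.toNFCseq.hgt n) : (S.T y).1 n = some (z + 1) := by
  obtain ⟨c, j, h1, h2⟩ := T_both y n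
  have h3 := NFCseq.Xpt.dn_of_coord h1 hz
  exact NFCseq.Xpt.coord_of h2
    (S.toNFCseq.dn_shift (NFCseq.Xpt.lt_hgt h1) h3 hlt (by omega))

theorem T_pred {y : S.toNFCseq.Xpt} {n z : ℕ} (hz : (S.T y).1 n = some (z + 1)) :
    y.1 n = some z := by
  obtain ⟨c, j, h1, h2⟩ := T_both y n
  have h3 := NFCseq.Xpt.dn_of_coord h2 hz
  exact NFCseq.Xpt.coord_of h1
    (S.toNFCseq.dn_shift (NFCseq.Xpt.lt_hgt h2) h3
      ((Nat.lt_succ_self z).trans (NFCseq.Xpt.lt_hgt hz)) (by omega))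

/-- Staying in the same subcolumn of tower `n` amounts to moving up in tower `n`. -/
theorem T_same_col {y : S.toNFCseq.Xpt} {n a b : ℕ} (ha : y.1 n = some a)
    (hb : (S.T y).1 n = some b) (hcol : S.toNFCseq.tcol n y = S.toNFCseq.tcol n (S.T y)) :
    b = a + 1 := by
  obtain ⟨z, hz⟩ := NFCseq.Xpt.exists_coord ha (Nat.le_succ n)
  obtain ⟨z', hz'⟩ := NFCseq.Xpt.exists_coord hb (Nat.le_succ n)
  have e1 := S.toNFCseq.hgt_succ n
  have ha' : S.toNFCseq.pmap n z = some a := by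
    have := y.2.1 n
    rw [hz, ha] at this; exact this.symm
  have hb' : S.toNFCseq.pmap n z' = some b := by
    have := (S.T y).2.1 n
    rw [hz', hb] at this; exact this.symm
  rw [NFCseq.tcol_eq hz, NFCseq.tcol_eq hz'] at hcol
  rw [NFCseq.pmap_some_iff] at ha' hb'
  have hpos := S.toNFCseq.hgt_pos n
  have hz'z : z' = z + 1 := by
    rcases Nat.eq_zero_or_pos z' with h0 | h0
    · subst h0
      by_cases hlt : z + 1 < S.toNFCseq.hgt (n + 1)
      · have := T_succ hz hlt
        rw [hz'] at this
        simp at this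
      · rw [if_neg (by omega), if_neg (by omega), if_pos (by omega)] at hcol
        omega
    · obtain ⟨w, rfl⟩ := Nat.exists_eq_succ_of_ne_zero h0.ne'
      have := T_pred hz'
      rw [hz] at this
      simp only [Option.some.injEq] at this
      omega
  subst hz'z
  split_ifs at hcol <;> omega

theorem T_iter {y : S.toNFCseq.Xpt} {n z r : ℕ} (hz : y.1 n = some z)
    (hlt : z + r < S.toNFCseq.hgt n) : (S.T^[r] y).1 n = some (z + r) := by
  induction r with
  | zero => simpa using hz
  | succ r ih =>
    rw [Function.iterate_succ_apply']
    exact T_succ (ih (by omega)) (by omega)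

/-- Along a crossing, every coordinate just moves up in the tower. -/
theorem crossing_heights {d : ℕ} {o : ℤ → S.Xd d} (ho : ∀ j, S.Td d (o j) = o (j + 1))
    {n : ℕ} {K : Finset ℤ} (hK : S.IsCrossing d o n K) (i : Fin d) :
    ∃ A : ℤ, ∀ t ∈ K, ∃ z : ℕ, (z : ℤ) = A + t ∧ (o t i).1 n = some z := by
  obtain ⟨⟨a, b, hab, rfl⟩, h2, h3, -⟩ := hK
  obtain ⟨z0, hz0⟩ := Option.ne_none_iff_exists'.1 (h2 a (by simp [hab]) i)
  refine ⟨z0 - a, fun t ht => ?_⟩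
  rw [Finset.mem_Icc] at ht
  obtain ⟨hat, htb⟩ := ht
  induction t, hat using Int.leInduction with
  | base => exact ⟨z0, by ring, hz0⟩
  | succ t hat ih =>
    obtain ⟨z, hz, hzt⟩ := ih (by omega)
    obtain ⟨z', hz'⟩ := Option.ne_none_iff_exists'.1
      (h2 (t + 1) (by simp; omega) i)
    have hc := h3 i t (by simp; omega) (t + 1) (by simp; omega)
    have e : o (t + 1) i = S.T (o t i) := by rw [← ho t]; rfl
    rw [e] at hz' hc
    have := T_same_col hzt hz' hc
    refine ⟨z', by omega, by rw [e]; exact hz'⟩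

end NFC

/-! ### The sequences `n_ℓ` and `k(ℓ)` -/

namespace NFCseq

variable (P : NFCseq)

theorem nseq_strictMono : StrictMono P.nseq :=
  strictMono_nat_of_lt_succ fun n => by
    have := P.nseq_growth (n + 1) (by omega)
    simp only [Nat.add_sub_cancel] at this
    omega

theorem lseq_ge (k : ℕ) : k + 1 ≤ P.lseq k := by
  induction k with
  | zero => simp [P.lseq_zero]
  | succ k ih => have := P.lseq_strictMono (Nat.lt_add_one k); omega

theorem kOf_lt {ℓ : ℕ} (h : 1 ≤ ℓ) : P.kOf ℓ + 1 ≤ ℓ := by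
  have hne : {k | P.lseq k ≤ ℓ}.Nonempty := ⟨0, by simpa [P.lseq_zero] using h⟩
  have hb : BddAbove {k | P.lseq k ≤ ℓ} :=
    ⟨ℓ, fun k (hk : P.lseq k ≤ ℓ) => by have := P.lseq_ge k; omega⟩
  have : P.lseq (P.kOf ℓ) ≤ ℓ := Nat.sSup_mem hne hb
  exact (P.lseq_ge _).trans this

theorem spa_nseq {ℓ : ℕ} (h : 1 ≤ ℓ) : P.spa (P.nseq ℓ) = P.hgt (P.nseq ℓ - P.kOf ℓ) := by
  have hex : ∃ ℓ', 1 ≤ ℓ' ∧ P.nseq ℓ' = P.nseq ℓ := ⟨ℓ, h, rfl⟩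
  rw [spa, dif_pos hex, P.nseq_strictMono.injective (Nat.find_spec hex).2]

theorem spa_eq_zero {ℓ n : ℕ} (h1 : P.nseq (ℓ - 1) < n) (h2 : n < P.nseq ℓ) :
    P.spa n = 0 := by
  rw [spa, dif_neg]
  rintro ⟨ℓ', h3, rfl⟩
  rw [P.nseq_strictMono.lt_iff_lt] at h1 h2
  omega

theorem kOf_le_nseq {ℓ : ℕ} (h : 1 ≤ ℓ) : P.nseq (ℓ - 1) + P.kOf ℓ < P.nseq ℓ := by
  have := P.nseq_growth ℓ h
  have := P.kOf_lt h
  omega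

end NFCseq

/-! ### Coming back to a fixed box with bounded steps -/

theorem lt_three_pow_pOne (d : ℕ) : d ≤ 3 ^ pOne d ∧ d < pOne d := by
  have hne : {p : ℕ | 2 * d + 1 < 3 ^ p ∧ d < p}.Nonempty := by
    refine ⟨2 * d + 1, ?_, by omega⟩
    exact Nat.lt_pow_self (by omega)
  have h : 2 * d + 1 < 3 ^ pOne d ∧ d < pOne d := Nat.sInf_mem hne
  exact ⟨by omega, h.2⟩

theorem pTwo_spec {η : ℝ} (hη : 0 < η) : 3 ≤ η * 3 ^ pTwo η := by
  have hne : {p : ℕ | ((3 : ℝ) ^ p)⁻¹ < η / 3}.Nonempty := by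
    obtain ⟨n, hn⟩ := exists_pow_lt_of_lt_one (show 0 < η / 3 by positivity)
      (show (3 : ℝ)⁻¹ < 1 by norm_num)
    exact ⟨n, by simpa using hn⟩
  have h : ((3 : ℝ) ^ pTwo η)⁻¹ < η / 3 := Nat.sInf_mem hne
  rw [inv_lt_iff_one_lt_mul₀ (by positivity)] at h
  nlinarith

/-- An upper bound for `|I| / h_N + 1`, where `N = n - p₂` and `|I| ≤ M h_n`: it bounds the number
of steps of length `h_N` needed to go from any point of `I` to any given point of `I`. -/
def retQ (η M : ℝ) : ℕ := ⌈M * 7 ^ pTwo η⌉₊ + 1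

namespace NFC

variable {S : NFC}

/-- From a time `t` of `I` at which all coordinates sit well inside tower `n₁`, one can jump to
a time of `J` at which all coordinates lie in tower `n₁`, the jump being of the form
`q * h_N + r * h_b` with `N = n - p₂`, `b = n_{ℓ-1} - k(ℓ-1)`, `|q| ≤ Q` and `r ≤ d`. The steps of
length `h_N` reach `J`; the steps of length `h_b` are needed only when `N ≤ n_{ℓ-1}`, to get all
coordinates out of the gaps inserted above tower `n_{ℓ-1}`. -/
theorem exists_return {d : ℕ} {η M : ℝ} (hη : 0 < η)
    {o : ℤ → S.Xd d} (ho : ∀ j, S.Td d (o j) = o (j + 1))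
    {I J : Finset ℤ} (hJI : J ⊆ I) (hI : IsIntervalZ I) (hJ : IsIntervalZ J)
    {ℓ n n₁ : ℕ} (hℓ : 2 ≤ ℓ)
    (hn₁ : n₁ ≤ S.nseq (ℓ - 1) - S.toNFCseq.kOf (ℓ - 1))
    (hn1 : S.nseq (ℓ - 1) - S.toNFCseq.kOf (ℓ - 1) + pOne d + 2 * pTwo η ≤ n)
    (hn2 : n < S.nseq ℓ)
    {K : Finset ℤ} (hK : S.IsCrossing d o (S.nseq ℓ) K) (hIK : I ⊆ K)
    (hJlo : η * (S.toNFCseq.hgt n : ℝ) ≤ (J.card : ℝ))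
    (hIhi : (I.card : ℝ) ≤ M * (S.toNFCseq.hgt n : ℝ))
    {t : ℤ} (ht : t ∈ I) {v : Fin d → ℕ} (hv : ∀ i, (o t i).1 n₁ = some (v i))
    (hE1 : ∀ i, 2 * retQ η M + d + 3 ≤ v i)
    (hE2 : ∀ i, v i + (2 * retQ η M + d + 3) < S.toNFCseq.hgt n₁) :
    ∃ q ∈ Finset.Icc (-(retQ η M : ℤ)) (retQ η M), ∃ r ∈ Finset.range (d + 1),
      t + q * S.toNFCseq.hgt (n - pTwo η) +
        r * S.toNFCseq.hgt (S.nseq (ℓ - 1) - S.toNFCseq.kOf (ℓ - 1)) ∈ J ∧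
      o (t + q * S.toNFCseq.hgt (n - pTwo η) +
        r * S.toNFCseq.hgt (S.nseq (ℓ - 1) - S.toNFCseq.kOf (ℓ - 1))) ∈ S.towerD d n₁ := by
  set P := S.toNFCseq with hP
  set Q := retQ η M with hQ
  set p := pTwo η with hp
  set e := P.nseq (ℓ - 1) with he
  set k := P.kOf (ℓ - 1) with hk
  set b := e - k with hb
  set L := P.nseq ℓ with hL
  obtain ⟨N, rfl⟩ : ∃ N, n = N + p := ⟨n - p, by omega⟩
  rw [Nat.add_sub_cancel]
  obtain ⟨α, β, hαβ, rfl⟩ := hJ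
  have hk1 : P.nseq (ℓ - 1 - 1) + k < e := P.kOf_le_nseq (by omega)
  have hkb : b + k = e := by omega
  have heL : e < L := P.nseq_strictMono (by omega)
  have hhN : 0 < P.hgt N := P.hgt_pos N
  -- sizes of the intervals in terms of `h_N`
  have hJ3 : 3 * (P.hgt N : ℤ) ≤ β + 1 - α := by
    have h1 : (3 : ℝ) ^ p * P.hgt N ≤ P.hgt (N + p) := by exact_mod_cast P.le_hgt_add N p
    have h2 := pTwo_spec hη
    have h3 : ((Finset.Icc α β).card : ℝ) = ((β + 1 - α : ℤ) : ℝ) := by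
      rw [Int.card_Icc, ← Int.cast_natCast, Int.toNat_of_nonneg (by omega)]
    have h4 : (3 : ℝ) * P.hgt N ≤ ((β + 1 - α : ℤ) : ℝ) := by
      rw [← h3]
      calc (3 : ℝ) * P.hgt N ≤ η * 3 ^ p * P.hgt N := by gcongr
        _ = η * (3 ^ p * P.hgt N) := by ring
        _ ≤ η * P.hgt (N + p) := by gcongr
        _ ≤ _ := hJlo
    exact_mod_cast h4
  have hM0 : 0 ≤ M := by
    by_contra! hneg
    have : M * (P.hgt (N + p) : ℝ) < 0 :=
      mul_neg_of_neg_of_pos hneg (by exact_mod_cast P.hgt_pos _)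
    have : (0 : ℝ) ≤ (I.card : ℝ) := by positivity
    linarith
  have hIQ : (I.card : ℤ) + P.hgt N ≤ Q * P.hgt N := by
    have h1 : (P.hgt (N + p) : ℝ) ≤ 7 ^ p * P.hgt N := by exact_mod_cast P.hgt_add_le N p
    have h2 : (I.card : ℝ) + P.hgt N ≤ Q * P.hgt N := by
      have h3 : M * 7 ^ p ≤ (⌈M * 7 ^ p⌉₊ : ℝ) := Nat.le_ceil _
      have h4 : (Q : ℝ) = ⌈M * 7 ^ p⌉₊ + 1 := by rw [hQ, retQ]; push_cast; rfl
      rw [h4, add_mul, one_mul]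
      gcongr
      calc (I.card : ℝ) ≤ M * P.hgt (N + p) := hIhi
        _ ≤ M * (7 ^ p * P.hgt N) := by gcongr
        _ = M * 7 ^ p * P.hgt N := by ring
        _ ≤ _ := by gcongr
    exact_mod_cast h2
  -- the choice of `q`: move into the first third of `J`
  obtain ⟨q, hq, hq1, hq2⟩ : ∃ q : ℤ, |q| ≤ Q ∧ α ≤ t + q * P.hgt N ∧
      t + q * P.hgt N < α + P.hgt N := by
    refine ⟨-((t - α) / P.hgt N), ?_, ?_, ?_⟩
    · have hα : α ∈ I := hJI (by simp [hαβ])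
      have habs : |t - α| ≤ I.card := by
        obtain ⟨a', b', hab', rfl⟩ := hI
        rw [Int.card_Icc, Int.toNat_of_nonneg (by omega)]
        rw [Finset.mem_Icc] at ht hα
        rw [abs_le]; omega
      have h5 := Int.emod_nonneg (t - α) (show (P.hgt N : ℤ) ≠ 0 by omega)
      have h6 := Int.emod_lt_of_pos (t - α) (show 0 < (P.hgt N : ℤ) by omega)
      have h7 := Int.emod_add_mul_ediv (t - α) (P.hgt N)
      rw [abs_neg]
      rw [abs_le] at habs ⊢
      have hpos : (0:ℤ) < P.hgt N := by omega
      constructor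
      · refine le_of_mul_le_mul_right ?_ hpos
        linarith
      · refine le_of_mul_le_mul_right ?_ hpos
        linarith
    · have h5 := Int.emod_nonneg (t - α) (show (P.hgt N : ℤ) ≠ 0 by omega)
      have h7 := Int.emod_add_mul_ediv (t - α) (P.hgt N)
      linarith
    · have h6 := Int.emod_lt_of_pos (t - α) (show 0 < (P.hgt N : ℤ) by omega)
      have h7 := Int.emod_add_mul_ediv (t - α) (P.hgt N)
      linarith
  have hqI : q ∈ Finset.Icc (-(Q : ℤ)) Q := by rwa [Finset.mem_Icc, ← abs_le]
  choose A hA using fun i => crossing_heights ho hK i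
  choose z hzA hz using fun i => hA i t (hIK ht)
  have hfin : ∀ {B τ τ' : ℕ} (i : Fin d), n₁ ≤ B → B ≤ L → P.dn B (L - B) (z i) = some τ →
      ∀ z' : ℕ, P.dn B (L - B) z' = some τ' → |(τ' : ℤ) - τ| ≤ 2 * Q + d + 3 →
      ∀ y : P.Xpt, y.1 L = some z' → y.1 n₁ ≠ none := by
    intro B τ τ' i hB hBL hτ z' hτ' habs y hy
    obtain ⟨c, rfl⟩ := Nat.exists_eq_add_of_le hB
    obtain ⟨c', hc'⟩ := Nat.exists_eq_add_of_le hBL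
    rw [hc'] at hz hy
    rw [hc', Nat.add_sub_cancel_left] at hτ hτ'
    have h1 := NFCseq.Xpt.coord_of (hz i) hτ
    have h2 := NFCseq.Xpt.coord_of hy hτ'
    have h3 := NFCseq.Xpt.dn_of_coord h1 (hv i)
    have h4 := hE1 i
    have h5 := hE2 i
    rw [abs_le] at habs
    have h6 := P.dn_shift (j' := τ') (v' := v i + τ' - τ) (NFCseq.Xpt.lt_hgt h1) h3
      (by omega) (by omega)
    rw [NFCseq.Xpt.coord_of h2 h6]
    simp
  -- margins in the intermediate towers
  have hmar : ∀ {B : ℕ} (i : Fin d), n₁ ≤ B → B ≤ L → ∃ τ, P.dn B (L - B) (z i) = some τ ∧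
      2 * Q + d + 3 ≤ τ ∧ τ + (2 * Q + d + 3) < P.hgt B := by
    intro B i hB hBL
    obtain ⟨τ, hτ⟩ := NFCseq.Xpt.exists_coord (hv i) hB
    obtain ⟨c, rfl⟩ := Nat.exists_eq_add_of_le hB
    obtain ⟨c', hc'⟩ := Nat.exists_eq_add_of_le hBL
    rw [hc'] at hz
    rw [hc', Nat.add_sub_cancel_left]
    refine ⟨τ, NFCseq.Xpt.dn_of_coord (hz i) hτ, ?_⟩
    have := P.dn_bound (NFCseq.Xpt.lt_hgt hτ) (NFCseq.Xpt.dn_of_coord hτ (hv i))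
    have h4 := hE1 i
    have h5 := hE2 i
    omega
  by_cases hNe : e < N
  · have hJm : t + q * P.hgt N + (0 : ℕ) * P.hgt b ∈ Finset.Icc α β := by
      rw [Finset.mem_Icc]; omega
    refine ⟨q, hqI, 0, by simp, hJm, fun i => ?_⟩
    obtain ⟨z', hz'A, hz'⟩ := hA i _ (hIK (hJI hJm))
    obtain ⟨τ, hτ, h1, h2⟩ := hmar (B := N) i (by omega) (by omega)
    have hNL : N + (L - N) = L := by omega
    obtain ⟨τ', hτ', h3⟩ := P.move_pure (N := N) (c := L - N) (z' := z') (Q := Q) (q := q)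
      (fun n h1 h2 => P.spa_eq_zero (ℓ := ℓ) (by omega) (by omega)) hτ (by omega) (by omega)
      hq (by rw [hz'A, hzA]; push_cast; ring) (by rw [hNL]; exact NFCseq.Xpt.lt_hgt hz')
    exact hfin i (by omega) (by omega) hτ z' hτ' (by omega) _ hz'
  · push Not at hNe
    obtain ⟨a, rfl⟩ := Nat.exists_eq_add_of_le (show b ≤ N by omega)
    obtain ⟨c, hc⟩ := Nat.exists_eq_add_of_le heL.le
    have hbL : L - b = k + c := by omega
    have hLb : L = b + k + c := by omega
    have hp1 := lt_three_pow_pOne d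
    have hdb : (d : ℤ) * P.hgt b ≤ P.hgt (b + a) := by
      have h1 := P.le_hgt_add b (pOne d)
      have h2 := P.hgt_mono (show b + pOne d ≤ b + a by omega)
      have h3 := Nat.mul_le_mul_right (P.hgt b) hp1.1
      exact_mod_cast h3.trans (h1.trans h2)
    have hd3 : d ≤ 3 ^ k :=
      hp1.1.trans (Nat.pow_le_pow_right (by omega) (by omega))
    have hJ0 : t + q * P.hgt (b + a) ∈ Finset.Icc α β := by
      rw [Finset.mem_Icc]; omega
    choose ρ hρ hρ1 hρ2 using fun i => hmar (B := b) i hn₁ (by omega)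
    have key : ∀ i, _ := fun i => P.move_gap (b := b) (k := k) (c := c) (a := a) (z := z i)
      (ρ := ρ i) (Q := Q) (q := q)
      (fun n h1 h2 => P.spa_eq_zero (ℓ := ℓ - 1) (by omega) (by omega))
      (by rw [hkb]; exact P.spa_nseq (by omega))
      (fun n h1 h2 => P.spa_eq_zero (ℓ := ℓ) (by omega) (by omega))
      (by omega) (by omega) (by rw [← hLb]; exact NFCseq.Xpt.lt_hgt (hz i))
      (by rw [← hbL]; exact hρ i) (by have := hρ2 i; omega) hq
      (by
        obtain ⟨z', hz'A, -⟩ := hA i _ (hIK (hJI hJ0))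
        have := hzA i
        omega)
    choose bad hbad using key
    -- `d` bad values cannot exhaust the `d + 1` available ones
    obtain ⟨r, hr, hrbad⟩ : ∃ r ∈ Finset.range (d + 1), r ∉ Finset.univ.image bad := by
      apply Finset.exists_mem_notMem_of_card_lt_card
      refine lt_of_le_of_lt Finset.card_image_le ?_
      simp
    have hrd : r ≤ d := by rw [Finset.mem_range] at hr; omega
    have hrh : (r : ℤ) * P.hgt b ≤ d * P.hgt b := by
      gcongr
    have hJm : t + q * P.hgt (b + a) + r * P.hgt b ∈ Finset.Icc α β := by
      have : (0 : ℤ) ≤ r * P.hgt b := by positivity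
      rw [Finset.mem_Icc]; omega
    refine ⟨q, hqI, r, hr, hJm, fun i => ?_⟩
    obtain ⟨z', hz'A, hz'⟩ := hA i _ (hIK (hJI hJm))
    have hρ1i := hρ1 i
    have hρ2i := hρ2 i
    obtain ⟨ρ', hρ', h3⟩ := hbad i r (hrd.trans hd3)
      (fun h => hrbad (Finset.mem_image.2 ⟨i, Finset.mem_univ _, h.symm⟩)) (by omega) (by omega)
      z' (by rw [hz'A, hzA]; ring) (by rw [← hLb]; exact NFCseq.Xpt.lt_hgt hz')
    exact hfin i hn₁ (by omega) (hρ i) z' (by rw [hbL]; exact hρ') (by omega) _ hz'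

/-- The number of visits in `I` to an `n₁`-box far from the edges of tower `n₁` is at most a
constant times the number of visits in `J` to `C_{n₁}^d`. -/
theorem card_le_card_return {d : ℕ} {η M : ℝ} (hη : 0 < η)
    {o : ℤ → S.Xd d} (ho : ∀ j, S.Td d (o j) = o (j + 1))
    {I J : Finset ℤ} (hJI : J ⊆ I) (hI : IsIntervalZ I) (hJ : IsIntervalZ J)
    {ℓ n n₁ : ℕ} (hℓ : 2 ≤ ℓ)
    (hn₁ : n₁ ≤ S.nseq (ℓ - 1) - S.toNFCseq.kOf (ℓ - 1))
    (hn1 : S.nseq (ℓ - 1) - S.toNFCseq.kOf (ℓ - 1) + pOne d + 2 * pTwo η ≤ n)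
    (hn2 : n < S.nseq ℓ)
    {K : Finset ℤ} (hK : S.IsCrossing d o (S.nseq ℓ) K) (hIK : I ⊆ K)
    (hJlo : η * (S.toNFCseq.hgt n : ℝ) ≤ (J.card : ℝ))
    (hIhi : (I.card : ℝ) ≤ M * (S.toNFCseq.hgt n : ℝ))
    {v : Fin d → ℕ} (hE1 : ∀ i, 2 * retQ η M + d + 3 ≤ v i)
    (hE2 : ∀ i, v i + (2 * retQ η M + d + 3) < S.toNFCseq.hgt n₁) :
    (I.filter fun t => ∀ i, (o t i).1 n₁ = some (v i)).card ≤
      (2 * retQ η M + 1) * (d + 1) * (J.filter fun t => o t ∈ S.towerD d n₁).card := by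
  set D : Finset ℤ := (Finset.Icc (-(retQ η M : ℤ)) (retQ η M) ×ˢ Finset.range (d + 1)).image
    fun x => x.1 * S.toNFCseq.hgt (n - pTwo η) +
        x.2 * S.toNFCseq.hgt (S.nseq (ℓ - 1) - S.toNFCseq.kOf (ℓ - 1)) with hD
  have hDc : D.card ≤ (2 * retQ η M + 1) * (d + 1) := by
    refine Finset.card_image_le.trans ?_
    rw [Finset.card_product, Int.card_Icc, Finset.card_range]
    refine Nat.mul_le_mul_right _ ?_
    omega
  have hsub : (I.filter fun t => ∀ i, (o t i).1 n₁ = some (v i)) ⊆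
      D.biUnion fun δ => (J.filter fun t => o t ∈ S.towerD d n₁).image fun s => s - δ := by
    intro t ht
    rw [Finset.mem_filter] at ht
    obtain ⟨q, hq, r, hr, h1, h2⟩ := exists_return hη ho hJI hI hJ hℓ hn₁ hn1 hn2 hK hIK hJlo
      hIhi ht.1 ht.2 hE1 hE2
    rw [Finset.mem_biUnion]
    refine ⟨_, Finset.mem_image.2 ⟨(q, r), Finset.mk_mem_product hq hr, rfl⟩, ?_⟩
    rw [Finset.mem_image]
    exact ⟨_, Finset.mem_filter.2 ⟨h1, h2⟩, by simp only; ring⟩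
  calc _ ≤ _ := Finset.card_le_card hsub
    _ ≤ D.card * (J.filter fun t => o t ∈ S.towerD d n₁).card :=
      Finset.card_biUnion_le_card_mul _ _ _ fun δ _ => Finset.card_image_le
    _ ≤ _ := Nat.mul_le_mul_right _ hDc

end NFC

/-! ### Points of `X_∞` -/

namespace NFCseq

variable {P : NFCseq}

theorem Xpt.pmap_of_coord {y : P.Xpt} {n z w : ℕ} (hz : y.1 (n + 1) = some z)
    (hw : y.1 n = some w) : P.pmap n z = some w := by
  have := y.2.1 n
  rw [hz, hw] at this; exact this.symm

/-- A point which is not in the first occurrence of tower `n` inside tower `n + c` has height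
at least `h_n` there. -/
theorem Xpt.low_of_tcol {y : P.Xpt} {n v : ℕ} (hv : y.1 n = some v) :
    ∀ {c z : ℕ}, y.1 (n + c) = some z → ∀ {r : ℕ}, n ≤ r → r < n + c → P.tcol r y ≠ 1 →
      P.hgt n ≤ z := by
  intro c
  induction c with
  | zero => intro z _ r h1 h2; omega
  | succ c ih =>
    intro z hz r h1 h2 h3
    obtain ⟨w, hw⟩ := Xpt.exists_coord hv (Nat.le_add_right n c)
    rw [← add_assoc] at hz
    have hp := (P.pmap_some_iff _ _ _).1 (Xpt.pmap_of_coord hz hw)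
    have hm := P.hgt_mono (Nat.le_add_right n c)
    rcases Nat.lt_or_ge r (n + c) with hr | hr
    · have := ih hw h1 hr h3
      omega
    · obtain rfl : r = n + c := by omega
      rw [tcol_eq hz] at h3
      split_ifs at h3 <;> omega

/-- A point which is not in the last occurrence of tower `n` inside tower `n + c` is at distance
more than `h_n` from the top. -/
theorem Xpt.high_of_tcol {y : P.Xpt} {n v : ℕ} (hv : y.1 n = some v) :
    ∀ {c z : ℕ}, y.1 (n + c) = some z → ∀ {r : ℕ}, n ≤ r → r < n + c → P.tcol r y ≠ 3 →
      z + P.hgt n < P.hgt (n + c) := by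
  intro c
  induction c with
  | zero => intro z _ r h1 h2; omega
  | succ c ih =>
    intro z hz r h1 h2 h3
    obtain ⟨w, hw⟩ := Xpt.exists_coord hv (Nat.le_add_right n c)
    rw [← add_assoc] at hz ⊢
    have hp := (P.pmap_some_iff _ _ _).1 (Xpt.pmap_of_coord hz hw)
    have hm := P.hgt_mono (Nat.le_add_right n c)
    have hs := P.hgt_succ (n + c)
    rcases Nat.lt_or_ge r (n + c) with hr | hr
    · have := ih hw h1 hr h3
      omega
    · obtain rfl : r = n + c := by omega
      rw [tcol_eq hz] at h3
      split_ifs at h3 <;> omega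

theorem occIdx_of_one {y : P.Xpt} {n m : ℕ} (h : ∀ r, n ≤ r → r < m → P.tcol r y = 1) :
    P.occIdx n m y = 0 := by
  unfold occIdx
  refine Finset.sum_eq_zero fun r hr => ?_
  rw [Finset.mem_Ico] at hr
  simp [h r hr.1 hr.2]

theorem occIdx_of_three {y : P.Xpt} {n c : ℕ}
    (h : ∀ r, n ≤ r → r < n + c → P.tcol r y = 3) : P.occIdx n (n + c) y + 1 = 3 ^ c := by
  unfold occIdx
  induction c with
  | zero => simp
  | succ c ih =>
    rw [← add_assoc, Finset.sum_Ico_succ_top (Nat.le_add_right n c), add_right_comm,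
      ih fun r h1 h2 => h r h1 (by omega), h (n + c) (by omega) (by omega)]
    simp [pow_succ]; ring

end NFCseq

namespace NFCX

variable {S : NFCX}

/-- Inside tower `n_ℓ`, a point of `X_∞` has margin at least `h_{n_ℓ - ℓ}` on both sides. -/
theorem Xinf_margin {y : S.toNFCseq.Xpt} (hy : y ∈ S.Xinf) {ℓ : ℕ} (h1 : 1 ≤ ℓ)
    (hℓ : S.ellx y ≤ ℓ) : ∃ z v, y.1 (S.nseq ℓ) = some z ∧ y.1 (S.nseq ℓ - ℓ) = some v ∧
      S.toNFCseq.hgt (S.nseq ℓ - ℓ) ≤ z ∧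
      z + S.toNFCseq.hgt (S.nseq ℓ - ℓ) < S.toNFCseq.hgt (S.nseq ℓ) := by
  have hg := S.nseq_growth ℓ h1
  obtain ⟨ha, hb, hc⟩ := S.Xinf_spec y hy ℓ hℓ (S.nseq ℓ - ℓ) (by omega) (by omega)
  obtain ⟨v, hv⟩ := Option.ne_none_iff_exists'.1 ha
  obtain ⟨z, hz⟩ := NFCseq.Xpt.exists_coord hv (Nat.sub_le (S.nseq ℓ) ℓ)
  have e : S.nseq ℓ = S.nseq ℓ - ℓ + ℓ := by omega
  refine ⟨z, v, hz, hv, ?_, ?_⟩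
  · have : ∃ r, S.nseq ℓ - ℓ ≤ r ∧ r < S.nseq ℓ ∧ S.toNFCseq.tcol r y ≠ 1 := by
      by_contra! hcon
      apply hb
      unfold NFCseq.inFirstHundred
      rw [NFCseq.occIdx_of_one hcon]; norm_num
    obtain ⟨r, r1, r2, r3⟩ := this
    rw [e] at hz r2
    exact NFCseq.Xpt.low_of_tcol hv hz r1 r2 r3
  · have : ∃ r, S.nseq ℓ - ℓ ≤ r ∧ r < S.nseq ℓ - ℓ + ℓ ∧ S.toNFCseq.tcol r y ≠ 3 := by
      by_contra! hcon
      apply hc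
      unfold NFCseq.inLastHundred
      have := NFCseq.occIdx_of_three hcon
      rw [← e] at this
      have e2 : S.nseq ℓ - (S.nseq ℓ - ℓ) = ℓ := by omega
      rw [e2]; omega
    obtain ⟨r, r1, r2, r3⟩ := this
    rw [e] at hz
    have := NFCseq.Xpt.high_of_tcol hv hz r1 r2 r3
    rwa [← e] at this

/-- A point of `X_∞` which is not at the edge of `C_N` returns to `C_N` after the time
`h_{n_ℓ - ℓ}`, while it has not yet left tower `n_ℓ`. -/
theorem Xinf_visit {y : S.toNFCseq.Xpt} (hy : y ∈ S.Xinf) {ℓ : ℕ} (h1 : 1 ≤ ℓ)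
    (hℓ : S.ellx y ≤ ℓ) {N v : ℕ} (hN : N ≤ S.nseq ℓ - ℓ) (hv : y.1 N = some v) (hv1 : 1 ≤ v)
    (hv2 : v + 1 < S.toNFCseq.hgt N) :
    ∃ w v' : ℕ, y.1 (S.nseq ℓ) = some w ∧
      w + S.toNFCseq.hgt (S.nseq ℓ - ℓ) < S.toNFCseq.hgt (S.nseq ℓ) ∧
      S.toNFCseq.dn N (S.nseq ℓ - N) (w + S.toNFCseq.hgt (S.nseq ℓ - ℓ)) = some v' := by
  obtain ⟨z, u, hz, hu, -, hzt⟩ := Xinf_margin hy h1 hℓ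
  have hg := S.nseq_growth ℓ h1
  have e : S.nseq ℓ = S.nseq ℓ - ℓ + ℓ := by omega
  set n := S.nseq ℓ - ℓ with hn
  have hdn : S.toNFCseq.dn n ℓ z = some u := by
    rw [e] at hz; exact NFCseq.Xpt.dn_of_coord hz hu
  obtain ⟨c, hc⟩ := Nat.exists_eq_add_of_le hN
  have hNu : S.toNFCseq.dn N c u = some v := by
    rw [hc] at hu; exact NFCseq.Xpt.dn_of_coord hu hv
  have hult : u < S.toNFCseq.hgt (N + c) := by rw [← hc]; exact NFCseq.Xpt.lt_hgt hu
  have hb := S.toNFCseq.dn_bound hult hNu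
  obtain ⟨τ', h3, h4⟩ := NFCseq.move_pure (P := S.toNFCseq) (Q := 1) (q := 1) (z' := z + S.toNFCseq.hgt n)
    (fun r r1 r2 => S.toNFCseq.spa_eq_zero (ℓ := ℓ) (by omega) (by omega)) hdn (by omega)
    (by rw [hc]; omega) (by norm_num) (by push_cast; ring) (by rw [← e]; exact hzt)
  rw [abs_le] at h4
  obtain ⟨v', hv'⟩ : ∃ v' : ℕ, (v' : ℤ) = v + τ' - u := ⟨(v + τ' - u : ℤ).toNat, by push_cast at *; omega⟩
  refine ⟨z, v', hz, hzt, ?_⟩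
  have e3 : S.nseq ℓ - N = c + ℓ := by omega
  rw [e3, S.toNFCseq.dn_comp, ← hc, h3]
  exact S.toNFCseq.dn_shift hult hNu (by push_cast at *; omega) (by push_cast at *; omega)

end NFCX

/-! ### Measures on rings of sets -/

/-- An additive set function on a ring of sets, dominated there by a measure which is finite on
the ring, extends to a measure: the domination gives continuity at `∅`. -/
theorem exists_measure_of_dominated {α : Type*} {mα : MeasurableSpace α} {C : Set (Set α)}
    (hC : IsSetRing C) (hgen : mα = MeasurableSpace.generateFrom C) (ν : Measure α)
    (hν : ∀ s ∈ C, ν s ≠ ⊤) (m : Set α → ℝ≥0∞) (m0 : m ∅ = 0)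
    (madd : ∀ {s t : Set α}, s ∈ C → t ∈ C → Disjoint s t → m (s ∪ t) = m s + m t)
    (hle : ∀ s ∈ C, m s ≤ ν s) : ∃ τ : Measure α, ∀ s ∈ C, τ s = m s := by
  let mc : AddContent ℝ≥0∞ C := hC.addContent_of_union m m0 (fun {s t} => madd)
  have hmc : ∀ s, mc s = m s := fun s => rfl
  have hmeas : ∀ s ∈ C, MeasurableSet s := fun s hs => by
    rw [hgen]; exact MeasurableSpace.measurableSet_generateFrom hs
  have hsub : mc.IsSigmaSubadditive := by
    refine isSigmaSubadditive_of_addContent_iUnion_eq_tsum hC fun f hf hU hd =>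
      addContent_iUnion_eq_sum_of_tendsto_zero hC mc
        (fun s hs => ne_top_of_le_ne_top (hν s hs) (hle s hs)) ?_ hf hU hd
    intro s hs hanti hemp
    have h1 : Tendsto (fun n => ν (s n)) atTop (𝓝 0) := by
      have := tendsto_measure_iInter_atTop (μ := ν)
        (fun n => (hmeas _ (hs n)).nullMeasurableSet) hanti ⟨0, hν _ (hs 0)⟩
      rwa [hemp, measure_empty] at this
    exact tendsto_of_tendsto_of_tendsto_of_le_of_le tendsto_const_nhds h1
      (fun _ => bot_le) (fun n => hle _ (hs n))
  exact ⟨mc.measure hC.isSetSemiring hgen.le hsub, fun s hs =>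
    mc.measure_eq hC.isSetSemiring hgen hsub hs⟩

/-! ### Cylinders in `X^d` -/

instance : DiscreteTopology (Option ℕ) := ⟨rfl⟩

namespace NFCseq

variable {P : NFCseq}

/-- The Borel σ-algebra of `X` is generated by the coordinates. -/
theorem Xpt.measurableSpace_eq :
    (inferInstance : MeasurableSpace P.Xpt) =
      ⨆ n : ℕ, (⊤ : MeasurableSpace (Option ℕ)).comap (fun y : P.Xpt => y.1 n) := by
  let _ : MeasurableSpace (Option ℕ) := ⊤
  have : BorelSpace (Option ℕ) := ⟨borel_eq_top_of_discrete.symm⟩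
  have h1 : borel P.Xpt = (borel (ℕ → Option ℕ)).comap Subtype.val := borel_comap
  have h2 : borel (ℕ → Option ℕ) = MeasurableSpace.pi :=
    (BorelSpace.measurable_eq (α := ℕ → Option ℕ)).symm
  change borel P.Xpt = _
  rw [h1, h2, MeasurableSpace.pi, MeasurableSpace.comap_iSup]
  simp only [MeasurableSpace.comap_comp]
  rfl

end NFCseq

namespace NFC

variable {S : NFC} {d : ℕ}

/-- The box `L_n^{v_1} × ⋯ × L_n^{v_d}`. -/
def bx (S : NFC) (d n : ℕ) (v : Fin d → ℕ) : Set (S.Xd d) := {y | ∀ i, (y i).1 n = some (v i)}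

/-- The union of the `n`-boxes with indices in `F`. -/
def cyl (S : NFC) (d n : ℕ) (F : Set (Fin d → ℕ)) : Set (S.Xd d) :=
  {y | ∃ v ∈ F, ∀ i, (y i).1 n = some (v i)}

/-- The ring of finite unions of boxes (unions at a fixed level are automatically finite). -/
def cylRing (S : NFC) (d : ℕ) : Set (Set (S.Xd d)) := {R | ∃ n F, R = S.cyl d n F}

/-- The indices of all `n`-boxes. -/
def vs (S : NFC) (d n : ℕ) : Finset (Fin d → ℕ) :=
  Fintype.piFinset fun _ => Finset.range (S.toNFCseq.hgt n)

theorem mem_vs {n : ℕ} {v : Fin d → ℕ} : v ∈ S.vs d n ↔ ∀ i, v i < S.toNFCseq.hgt n := by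
  simp [vs]

theorem vs_of_bx {n : ℕ} {v : Fin d → ℕ} {y : S.Xd d} (hy : y ∈ S.bx d n v) : v ∈ S.vs d n :=
  mem_vs.2 fun i => NFCseq.Xpt.lt_hgt (hy i)

theorem towerD_eq (n : ℕ) : S.towerD d n = S.cyl d n univ := by
  ext y
  constructor
  · intro h
    choose v hv using fun i => Option.ne_none_iff_exists'.1 (h i)
    exact ⟨v, mem_univ _, hv⟩
  · rintro ⟨v, -, hv⟩ i
    exact Option.ne_none_iff_exists'.2 ⟨_, hv i⟩

theorem bx_eq_cyl (n : ℕ) (v : Fin d → ℕ) : S.bx d n v = S.cyl d n {v} := by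
  ext y; simp [bx, cyl]

/-- A cylinder of level `n` is also a cylinder of level `n + c`. -/
theorem cyl_raise (n c : ℕ) (F : Set (Fin d → ℕ)) : S.cyl d n F =
    S.cyl d (n + c) {w | ∃ v ∈ F, ∀ i, S.toNFCseq.dn n c (w i) = some (v i)} := by
  ext y
  constructor
  · rintro ⟨v, hv, hy⟩
    choose w hw using fun i => NFCseq.Xpt.exists_coord (hy i) (Nat.le_add_right n c)
    exact ⟨w, ⟨v, hv, fun i => NFCseq.Xpt.dn_of_coord (hw i) (hy i)⟩, hw⟩
  · rintro ⟨w, ⟨v, hv, h⟩, hy⟩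
    exact ⟨v, hv, fun i => NFCseq.Xpt.coord_of (hy i) (h i)⟩

theorem cylRing_level {R : Set (S.Xd d)} (hR : R ∈ S.cylRing d) (N : ℕ) :
    ∃ n, N ≤ n ∧ ∃ F, R = S.cyl d n F := by
  obtain ⟨n, F, rfl⟩ := hR
  exact ⟨n + N, by omega, _, cyl_raise n N F⟩

theorem cylRing_two {R R' : Set (S.Xd d)} (hR : R ∈ S.cylRing d) (hR' : R' ∈ S.cylRing d) :
    ∃ n F F', R = S.cyl d n F ∧ R' = S.cyl d n F' := by
  obtain ⟨n, F, rfl⟩ := hR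
  obtain ⟨n', F', rfl⟩ := hR'
  have h := cyl_raise (S := S) n' n F'
  rw [add_comm n' n] at h
  exact ⟨n + n', _, _, cyl_raise n n' F, h⟩

theorem cyl_union (n : ℕ) (F F' : Set (Fin d → ℕ)) :
    S.cyl d n F ∪ S.cyl d n F' = S.cyl d n (F ∪ F') := by
  ext y
  constructor
  · rintro (⟨v, h1, h2⟩ | ⟨v, h1, h2⟩)
    exacts [⟨v, Or.inl h1, h2⟩, ⟨v, Or.inr h1, h2⟩]
  · rintro ⟨v, h1 | h1, h2⟩
    exacts [Or.inl ⟨v, h1, h2⟩, Or.inr ⟨v, h1, h2⟩]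

theorem bx_unique {n : ℕ} {v w : Fin d → ℕ} {y : S.Xd d} (hv : y ∈ S.bx d n v)
    (hw : y ∈ S.bx d n w) : v = w := by
  funext i
  have := (hv i).symm.trans (hw i)
  simpa using this

theorem cyl_inter (n : ℕ) (F F' : Set (Fin d → ℕ)) :
    S.cyl d n F ∩ S.cyl d n F' = S.cyl d n (F ∩ F') := by
  ext y
  constructor
  · rintro ⟨⟨v, h1, h2⟩, ⟨w, h3, h4⟩⟩
    obtain rfl := bx_unique (S := S) h2 h4
    exact ⟨v, ⟨h1, h3⟩, h2⟩
  · rintro ⟨v, h1, h2⟩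
    exact ⟨⟨v, h1.1, h2⟩, ⟨v, h1.2, h2⟩⟩

theorem cyl_sdiff (n : ℕ) (F F' : Set (Fin d → ℕ)) :
    S.cyl d n F \ S.cyl d n F' = S.cyl d n (F \ F') := by
  ext y
  constructor
  · rintro ⟨⟨v, h1, h2⟩, h⟩
    exact ⟨v, ⟨h1, fun h3 => h ⟨v, h3, h2⟩⟩, h2⟩
  · rintro ⟨v, h1, h2⟩
    refine ⟨⟨v, h1.1, h2⟩, ?_⟩
    rintro ⟨w, h3, h4⟩
    obtain rfl := bx_unique (S := S) h2 h4
    exact h1.2 h3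

theorem isSetRing_cylRing : IsSetRing (S.cylRing d) where
  empty_mem := ⟨0, ∅, by ext y; simp [cyl]⟩
  union_mem := by
    intro R R' hR hR'
    obtain ⟨n, F, F', rfl, rfl⟩ := cylRing_two hR hR'
    exact ⟨n, _, cyl_union n F F'⟩
  sdiff_mem := by
    intro R R' hR hR'
    obtain ⟨n, F, F', rfl, rfl⟩ := cylRing_two hR hR'
    exact ⟨n, _, cyl_sdiff n F F'⟩

theorem towerD_mono : Monotone (S.towerD d) := by
  intro n m h y hy i
  obtain ⟨v, hv⟩ := Option.ne_none_iff_exists'.1 (hy i)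
  exact Option.ne_none_iff_exists'.2 (NFCseq.Xpt.exists_coord hv h)

theorem iUnion_towerD : ⋃ n, S.towerD d n = univ := by
  refine eq_univ_of_forall fun y => ?_
  choose n hn using fun i => (y i).2.2
  refine mem_iUnion.2 ⟨Finset.univ.sup n, fun i => ?_⟩
  obtain ⟨v, hv⟩ := Option.ne_none_iff_exists'.1 (hn i)
  exact Option.ne_none_iff_exists'.2
    (NFCseq.Xpt.exists_coord hv (Finset.le_sup (f := n) (Finset.mem_univ i)))

theorem cyl_meas (n : ℕ) (F : Set (Fin d → ℕ)) : MeasurableSet (S.cyl d n F) := by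
  have hc : ∀ (i : Fin d) (v : ℕ), MeasurableSet {y : S.Xd d | (y i).1 n = some v} := by
    intro i v
    have h1 : MeasurableSet {y : S.toNFCseq.Xpt | y.1 n = some v} := by
      have : MeasurableSet[⨆ n : ℕ, (⊤ : MeasurableSpace (Option ℕ)).comap
          (fun y : S.toNFCseq.Xpt => y.1 n)] {y : S.toNFCseq.Xpt | y.1 n = some v} :=
        (le_iSup (fun n : ℕ => (⊤ : MeasurableSpace (Option ℕ)).comap
          (fun y : S.toNFCseq.Xpt => y.1 n)) n) _ ⟨{some v}, trivial, rfl⟩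
      rwa [← NFCseq.Xpt.measurableSpace_eq] at this
    exact measurable_pi_apply (X := fun _ : Fin d => S.toNFCseq.Xpt) i h1
  have : S.cyl d n F = ⋃ v ∈ F, ⋂ i, {y : S.Xd d | (y i).1 n = some (v i)} := by
    ext y; simp [cyl]
  rw [this]
  exact MeasurableSet.biUnion (Set.to_countable F) fun v _ => MeasurableSet.iInter fun i => hc i _

theorem bx_meas (n : ℕ) (v : Fin d → ℕ) : MeasurableSet (S.bx d n v) := by
  rw [bx_eq_cyl]; exact cyl_meas _ _

theorem towerD_meas (n : ℕ) : MeasurableSet (S.towerD d n) := by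
  rw [towerD_eq]; exact cyl_meas _ _

theorem cylRing_meas {R : Set (S.Xd d)} (hR : R ∈ S.cylRing d) : MeasurableSet R := by
  obtain ⟨n, F, rfl⟩ := hR; exact cyl_meas _ _

theorem towerD_mem (n : ℕ) : S.towerD d n ∈ S.cylRing d := ⟨n, _, towerD_eq n⟩

theorem bx_mem (n : ℕ) (v : Fin d → ℕ) : S.bx d n v ∈ S.cylRing d := ⟨n, _, bx_eq_cyl n v⟩

theorem cyl_subset_towerD (n : ℕ) (F : Set (Fin d → ℕ)) : S.cyl d n F ⊆ S.towerD d n := by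
  rw [towerD_eq]
  rintro y ⟨v, -, hv⟩
  exact ⟨v, mem_univ _, hv⟩

theorem generateFrom_cylRing :
    (inferInstance : MeasurableSpace (S.Xd d)) = MeasurableSpace.generateFrom (S.cylRing d) := by
  apply le_antisymm
  · change MeasurableSpace.pi ≤ _
    refine iSup_le fun i => ?_
    rw [show (fun a => (inferInstance : MeasurableSpace S.toNFCseq.Xpt)) = fun _ : Fin d => _ from
      funext fun _ => NFCseq.Xpt.measurableSpace_eq, MeasurableSpace.comap_iSup]
    refine iSup_le fun n => ?_
    rw [MeasurableSpace.comap_comp]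
    rintro _ ⟨A, -, rfl⟩
    have hsome : ∀ v : ℕ, MeasurableSet[MeasurableSpace.generateFrom (S.cylRing d)]
        {y : S.Xd d | (y i).1 n = some v} := by
      intro v
      have : {y : S.Xd d | (y i).1 n = some v} =
          ⋃ c, S.cyl d (n + c) {w | S.toNFCseq.dn n c (w i) = some v} := by
        ext y
        simp only [mem_ofPred_eq, mem_iUnion]
        constructor
        · intro hy
          have h1 : y ∈ ⋃ n, S.towerD d n := by rw [iUnion_towerD]; trivial
          obtain ⟨m, hm⟩ := mem_iUnion.1 h1
          have h2 := towerD_mono (S := S) (Nat.le_add_left m n) hm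
          rw [towerD_eq] at h2
          obtain ⟨w, -, hw⟩ := h2
          exact ⟨m, w, NFCseq.Xpt.dn_of_coord (hw i) hy, hw⟩
        · rintro ⟨c, w, h1, h2⟩
          exact NFCseq.Xpt.coord_of (h2 i) h1
      rw [this]
      exact MeasurableSet.iUnion fun c =>
        MeasurableSpace.measurableSet_generateFrom ⟨n + c, _, rfl⟩
    have hone : ∀ a : Option ℕ, MeasurableSet[MeasurableSpace.generateFrom (S.cylRing d)]
        {y : S.Xd d | (y i).1 n = a} := by
      intro a
      cases a with
      | some v => exact hsome v
      | none =>
        have : {y : S.Xd d | (y i).1 n = none} =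
            (⋃ v : ℕ, {y : S.Xd d | (y i).1 n = some v})ᶜ := by
          ext y
          simp only [mem_ofPred_eq, mem_compl_iff, mem_iUnion]
          cases (y i).1 n <;> simp
        rw [this]
        exact (MeasurableSet.iUnion hsome).compl
    have : ((fun y : S.toNFCseq.Xpt => y.1 n) ∘ fun b : S.Xd d => b i) ⁻¹' A =
        ⋃ a ∈ A, {y : S.Xd d | (y i).1 n = a} := by
      ext y; simp
    rw [this]
    exact MeasurableSet.biUnion (Set.to_countable A) fun a _ => hone a
  · exact MeasurableSpace.generateFrom_le fun R hR => cylRing_meas hR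

/-- The measure of a cylinder is the sum of the measures of its boxes. -/
theorem measure_cyl (ν : Measure (S.Xd d)) (n : ℕ) (F : Set (Fin d → ℕ)) :
    ν (S.cyl d n F) = ∑ v ∈ (S.vs d n).filter (· ∈ F), ν (S.bx d n v) := by
  have : S.cyl d n F = ⋃ v ∈ (S.vs d n).filter (· ∈ F), S.bx d n v := by
    ext y
    simp only [Finset.mem_filter, mem_iUnion, exists_prop]
    constructor
    · rintro ⟨v, h1, h2⟩
      exact ⟨v, ⟨vs_of_bx (S := S) h2, h1⟩, h2⟩
    · rintro ⟨v, ⟨-, h1⟩, h2⟩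
      exact ⟨v, h1, h2⟩
  rw [this, measure_biUnion_finset]
  · intro v _ w _ hvw
    exact Set.disjoint_left.2 fun y h1 h2 => hvw (bx_unique h1 h2)
  · exact fun v _ => bx_meas n v

theorem measure_cyl_congr {ν₁ ν₂ : Measure (S.Xd d)} {n : ℕ} {F : Set (Fin d → ℕ)}
    (h : ∀ v ∈ S.vs d n, v ∈ F → ν₁ (S.bx d n v) = ν₂ (S.bx d n v)) :
    ν₁ (S.cyl d n F) = ν₂ (S.cyl d n F) := by
  rw [measure_cyl, measure_cyl]
  refine Finset.sum_congr rfl fun v hv => ?_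
  rw [Finset.mem_filter] at hv
  exact h v hv.1 hv.2

theorem isNBox_bx {n : ℕ} {B : Set (S.Xd d)} (hB : S.IsNBox d n B) :
    ∃ v ∈ S.vs d n, B = S.bx d n v := by
  obtain ⟨v, hv, rfl⟩ := hB
  exact ⟨v, mem_vs.2 hv, rfl⟩

theorem bx_isNBox {n : ℕ} {v : Fin d → ℕ} (hv : v ∈ S.vs d n) : S.IsNBox d n (S.bx d n v) :=
  ⟨v, mem_vs.1 hv, rfl⟩

end NFC

/-! ### Rigidity: a measure dominated by `σ` and invariant on boxes -/

namespace NFC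

variable {S : NFC} {d : ℕ}

/-- The indices of the `n`-boxes none of whose sides is the top level. -/
def marg (S : NFC) (d n : ℕ) : Set (Fin d → ℕ) := {v | ∀ i, v i + 1 < S.toNFCseq.hgt n}

/-- Measures carried by the boxes which avoid top levels are determined by their values on these
boxes. -/
theorem ext_marg {ν₁ ν₂ : Measure (S.Xd d)} (hfin : ∀ n, ν₁ (S.towerD d n) ≠ ⊤)
    (h1 : ν₁ (⋃ n, S.cyl d n (S.marg d n))ᶜ = 0) (h2 : ν₂ (⋃ n, S.cyl d n (S.marg d n))ᶜ = 0)
    (heq : ∀ n, ∀ v ∈ S.marg d n, ν₁ (S.bx d n v) = ν₂ (S.bx d n v)) : ν₁ = ν₂ := by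
  have hR : ∀ R ∈ S.cylRing d, ∀ N, ν₁ (R ∩ S.cyl d N (S.marg d N)) =
      ν₂ (R ∩ S.cyl d N (S.marg d N)) := by
    intro R hR N
    obtain ⟨n, hn, F, rfl⟩ := cylRing_level hR N
    obtain ⟨c, rfl⟩ := Nat.exists_eq_add_of_le hn
    rw [cyl_raise N c (S.marg d N), cyl_inter]
    refine measure_cyl_congr fun w hw1 hw => heq _ _ fun i => ?_
    obtain ⟨-, v, hv, hwv⟩ := hw
    have := S.toNFCseq.dn_bound (mem_vs.1 hw1 i) (hwv i)
    have := hv i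
    omega
  have hres : ∀ N, ν₁.restrict (S.cyl d N (S.marg d N)) = ν₂.restrict (S.cyl d N (S.marg d N)) := by
    intro N
    refine Measure.ext_of_generateFrom_of_iUnion (S.cylRing d) (S.towerD d)
      generateFrom_cylRing isSetRing_cylRing.isSetSemiring.isPiSystem iUnion_towerD towerD_mem ?_ ?_
    · intro i
      exact ne_top_of_le_ne_top (hfin i) (Measure.restrict_apply_le _ _)
    · intro R h
      rw [Measure.restrict_apply (cylRing_meas h), Measure.restrict_apply (cylRing_meas h)]
      exact hR R h N
  have hU := Measure.restrict_iUnion_congr.2 hres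
  have e1 : ν₁.restrict (⋃ n, S.cyl d n (S.marg d n)) = ν₁ :=
    Measure.restrict_eq_self_of_ae_mem h1
  have e2 : ν₂.restrict (⋃ n, S.cyl d n (S.marg d n)) = ν₂ :=
    Measure.restrict_eq_self_of_ae_mem h2
  rwa [e1, e2] at hU

theorem bx_preimage {n : ℕ} {v : Fin d → ℕ} (hv : v ∈ S.marg d n) :
    S.Td d ⁻¹' S.bx d n (fun i => v i + 1) = S.bx d n v := by
  ext y
  exact ⟨fun h i => T_pred (h i), fun h i => T_succ (h i) (hv i)⟩

/-- A measure dominated by a multiple of an ergodic `σ` and invariant on boxes is a multiple of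
`σ`: its density is `T`-invariant. -/
theorem eq_smul_of_box_invariant {σ : Measure (S.Xd d)} (hR : S.IsRadon d σ)
    (herg : Ergodic (S.Td d) σ) (hU : σ (⋃ n, S.cyl d n (S.marg d n))ᶜ = 0)
    {τ τ' : Measure (S.Xd d)} {c : ℝ≥0∞} (hc : c ≠ ⊤)
    (hsum : ∀ R ∈ S.cylRing d, τ R + τ' R = c * σ R)
    (hinv : ∀ n, ∀ v ∈ S.marg d n, τ (S.bx d n v) = τ (S.bx d n fun i => v i + 1)) :
    ∃ a : ℝ≥0∞, τ = a • σ := by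
  have hadd : τ + τ' = c • σ := by
    refine Measure.ext_of_generateFrom_of_iUnion (S.cylRing d) (S.towerD d)
      generateFrom_cylRing isSetRing_cylRing.isSetSemiring.isPiSystem iUnion_towerD towerD_mem ?_ ?_
    · intro i
      rw [Measure.add_apply, hsum _ (towerD_mem i)]
      exact ENNReal.mul_ne_top hc (hR i).ne
    · intro R h
      rw [Measure.add_apply, hsum R h]; rfl
  have hτle : τ ≤ c • σ := by rw [← hadd]; exact Measure.le_add_right le_rfl
  have hac : τ ≪ σ := (Measure.absolutelyContinuous_of_le hτle).trans
    (Measure.smul_absolutelyContinuous)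
  have hτfin : ∀ n, τ (S.towerD d n) ≠ ⊤ := fun n =>
    ne_top_of_le_ne_top (ENNReal.mul_ne_top hc (hR n).ne) (hτle _)
  have hsf : ∀ ν : Measure (S.Xd d), (∀ n, ν (S.towerD d n) ≠ ⊤) → SigmaFinite ν := fun ν hν =>
    ⟨⟨⟨S.towerD d, fun _ => trivial, fun n => (hν n).lt_top, iUnion_towerD⟩⟩⟩
  have := hsf σ fun n => (hR n).ne
  have := hsf τ hτfin
  have hf := Measure.measurable_rnDeriv τ σ
  have hτf : σ.withDensity (τ.rnDeriv σ) = τ := Measure.withDensity_rnDeriv_eq τ σ hac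
  have hTm := herg.toMeasurePreserving
  have hν : τ = σ.withDensity (τ.rnDeriv σ ∘ S.Td d) := by
    refine ext_marg hτfin (hac hU) (withDensity_absolutelyContinuous _ _ hU) fun n v hv => ?_
    rw [hinv n v hv, withDensity_apply _ (bx_meas n v), ← bx_preimage hv]
    conv_lhs => rw [← hτf]
    rw [withDensity_apply _ (bx_meas _ _)]
    exact (hTm.setLIntegral_comp_preimage (bx_meas _ _) hf).symm
  have hae : τ.rnDeriv σ ∘ S.Td d =ᵐ[σ] τ.rnDeriv σ := by
    rw [← withDensity_eq_iff_of_sigmaFinite (hf.comp hTm.measurable).aemeasurable hf.aemeasurable,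
      ← hν, hτf]
  obtain ⟨a, ha⟩ := herg.ae_eq_const_of_ae_eq_comp₀ hf.nullMeasurable hae
  refine ⟨a, ?_⟩
  rw [← hτf, withDensity_congr_ae ha]
  exact withDensity_const a

end NFC

/-! ### Boxes of small measure -/

namespace NFCseq

variable (P : NFCseq)

theorem le_nseq_sub (ℓ : ℕ) : ℓ ≤ P.nseq ℓ - ℓ := by
  rcases Nat.eq_zero_or_pos ℓ with rfl | h
  · exact Nat.zero_le _
  · have := P.nseq_growth ℓ h; omega

theorem nseq_sub_strictMono : StrictMono fun ℓ => P.nseq ℓ - ℓ := by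
  refine strictMono_nat_of_lt_succ fun ℓ => ?_
  have h := P.nseq_growth (ℓ + 1) (by omega)
  simp only [Nat.add_sub_cancel] at h
  show P.nseq ℓ - ℓ < P.nseq (ℓ + 1) - (ℓ + 1)
  omega

end NFCseq

namespace NFCX

variable {S : NFCX} {d : ℕ}

theorem exists_margin_box {y : S.toNFC.Xd d} (hy : ∀ i, y i ∈ S.Xinf) (E : ℕ) :
    ∃ n v, y ∈ S.toNFC.bx d n v ∧ (∀ i, E ≤ v i) ∧ ∀ i, v i + E < S.toNFCseq.hgt n := by
  set ℓ := E + 1 + Finset.univ.sup fun i => S.ellx (y i) with hℓ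
  have h1 : ∀ i, S.ellx (y i) ≤ ℓ := fun i =>
    (Finset.le_sup (f := fun i => S.ellx (y i)) (Finset.mem_univ i)).trans (by omega)
  choose z w hz _ hl hu using fun i => Xinf_margin (hy i) (ℓ := ℓ) (by omega) (h1 i)
  have h2 := S.toNFCseq.le_nseq_sub ℓ
  have h3 := S.toNFCseq.hgt_strictMono.le_apply (x := S.nseq ℓ - ℓ)
  refine ⟨S.nseq ℓ, z, hz, fun i => ?_, fun i => ?_⟩
  · have := hl i; omega
  · have := hu i; omega

theorem marg_conull {σ : Measure (S.toNFC.Xd d)}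
    (hconull : σ {y : S.toNFC.Xd d | ¬ ∀ i, y i ∈ S.Xinf} = 0) :
    σ (⋃ n, S.toNFC.cyl d n (S.toNFC.marg d n))ᶜ = 0 := by
  refine measure_mono_null ?_ hconull
  intro y hy hX
  obtain ⟨n, v, h1, -, h3⟩ := exists_margin_box hX 1
  exact hy (mem_iUnion.2 ⟨n, v, h3, h1⟩)

theorem exists_pos_box {σ : Measure (S.toNFC.Xd d)} (hσ0 : σ ≠ 0)
    (hconull : σ {y : S.toNFC.Xd d | ¬ ∀ i, y i ∈ S.Xinf} = 0) (E : ℕ) :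
    ∃ n v, 0 < σ (S.toNFC.bx d n v) ∧ (∀ i, E ≤ v i) ∧ ∀ i, v i + E < S.toNFCseq.hgt n := by
  by_contra! hcon
  apply hσ0
  rw [← Measure.measure_univ_eq_zero]
  have hn : σ (⋃ (n : ℕ) (v ∈ {v : Fin d → ℕ | (∀ i, E ≤ v i) ∧
      ∀ i, v i + E < S.toNFCseq.hgt n}), S.toNFC.bx d n v) = 0 := by
    refine measure_iUnion_null fun n => (measure_biUnion_null_iff (Set.to_countable _)).2 ?_
    rintro v ⟨h1, h2⟩
    by_contra h
    obtain ⟨i, hi⟩ := hcon n v (pos_iff_ne_zero.2 h) h1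
    exact absurd (h2 i) (by omega)
  refine measure_mono_null ?_ (measure_union_null hconull hn)
  intro y _
  by_cases hX : ∀ i, y i ∈ S.Xinf
  · obtain ⟨n, v, h1, h2, h3⟩ := exists_margin_box hX E
    exact Or.inr (mem_iUnion.2 ⟨n, mem_iUnion₂.2 ⟨v, ⟨h2, h3⟩, h1⟩⟩)
  · exact Or.inl hX

theorem box_translate {σ : Measure (S.toNFC.Xd d)}
    (hinv : ∀ n, ∀ v ∈ S.toNFC.marg d n,
      σ (S.toNFC.bx d n v) = σ (S.toNFC.bx d n fun i => v i + 1))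
    {n : ℕ} {v : Fin d → ℕ} (D : ℕ) (hD : ∀ i, v i + D < S.toNFCseq.hgt n) :
    σ (S.toNFC.bx d n fun i => v i + D) = σ (S.toNFC.bx d n v) := by
  induction D with
  | zero => rfl
  | succ D ih =>
    rw [← ih fun i => by have := hD i; omega]
    exact (hinv n (fun i => v i + D) fun i => by have := hD i; omega).symm

/-- The tower `C_N^d` contains boxes of arbitrarily small positive measure: a typical point of
`C_N^d` comes back to `C_N^d` arbitrarily many times before leaving some higher tower, so the
corresponding translates of its box are disjoint subsets of `C_N^d` of the same measure. -/
theorem exists_small_box {σ : Measure (S.toNFC.Xd d)} (hd : 0 < d) (hR : S.toNFC.IsRadon d σ)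
    (hconull : σ {y : S.toNFC.Xd d | ¬ ∀ i, y i ∈ S.Xinf} = 0)
    (hinv : ∀ n, ∀ v ∈ S.toNFC.marg d n,
      σ (S.toNFC.bx d n v) = σ (S.toNFC.bx d n fun i => v i + 1))
    {N : ℕ} {v₁ : Fin d → ℕ} (hpos : 0 < σ (S.toNFC.bx d N v₁)) (hv1 : ∀ i, 1 ≤ v₁ i)
    (hv2 : ∀ i, v₁ i + 1 < S.toNFCseq.hgt N) {c : ℝ≥0∞} (hc : 0 < c) :
    ∃ n v, 0 < σ (S.toNFC.bx d n v) ∧ σ (S.toNFC.bx d n v) < c := by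
  by_contra! hcon
  have hnull : σ (⋃ (n : ℕ) (v ∈ {v : Fin d → ℕ | σ (S.toNFC.bx d n v) = 0}),
      S.toNFC.bx d n v) = 0 :=
    measure_iUnion_null fun n => (measure_biUnion_null_iff (Set.to_countable _)).2 fun v hv => hv
  obtain ⟨y, hy, hy'⟩ : (S.toNFC.bx d N v₁ \ ({y : S.toNFC.Xd d | ¬ ∀ i, y i ∈ S.Xinf} ∪
      ⋃ (n : ℕ) (v ∈ {v : Fin d → ℕ | σ (S.toNFC.bx d n v) = 0}),
        S.toNFC.bx d n v)).Nonempty := by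
    refine nonempty_of_measure_ne_zero (μ := σ) ?_
    rw [measure_sdiff_null (measure_union_null hconull hnull)]
    exact hpos.ne'
  rw [mem_union, not_or] at hy'
  obtain ⟨hX, hN⟩ := hy'
  rw [mem_ofPred_eq, not_not] at hX
  set ℓ₀ := N + 1 + Finset.univ.sup fun i => S.ellx (y i) with hℓ₀
  have hell : ∀ i, S.ellx (y i) ≤ ℓ₀ := fun i =>
    (Finset.le_sup (f := fun i => S.ellx (y i)) (Finset.mem_univ i)).trans (by omega)
  obtain ⟨K, hK⟩ := ENNReal.exists_nat_mul_gt hc.ne' (hR N).ne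
  set L := S.nseq (ℓ₀ + K) with hL
  have hLN : N ≤ L := by
    have := S.toNFCseq.le_nseq_sub (ℓ₀ + K); omega
  choose z hz using fun i => NFCseq.Xpt.exists_coord (hy i) hLN
  have hcz : c ≤ σ (S.toNFC.bx d L z) := by
    refine hcon L z (pos_iff_ne_zero.2 fun h => hN ?_)
    exact mem_iUnion.2 ⟨L, mem_iUnion₂.2 ⟨z, h, hz⟩⟩
  set D : ℕ → ℕ := fun ℓ => S.toNFCseq.hgt (S.nseq ℓ - ℓ) with hDdef
  have hDmono : StrictMono D := S.toNFCseq.hgt_strictMono.comp S.toNFCseq.nseq_sub_strictMono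
  have key : ∀ ℓ ∈ Finset.Ico ℓ₀ (ℓ₀ + K), ∀ i, z i + D ℓ < S.toNFCseq.hgt L ∧
      ∃ v', S.toNFCseq.dn N (L - N) (z i + D ℓ) = some v' := by
    intro ℓ hℓ i
    rw [Finset.mem_Ico] at hℓ
    obtain ⟨w, v', h1, h2, h3⟩ := Xinf_visit (hX i) (ℓ := ℓ) (by omega) ((hell i).trans hℓ.1)
      (N := N) (by have := S.toNFCseq.le_nseq_sub ℓ; omega) (hy i) (hv1 i) (hv2 i)
    have hℓL : S.nseq ℓ ≤ L := S.toNFCseq.nseq_strictMono.monotone hℓ.2.le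
    obtain ⟨e, he⟩ := Nat.exists_eq_add_of_le hℓL
    have hNℓ : N ≤ S.nseq ℓ := by have := S.toNFCseq.le_nseq_sub ℓ; omega
    have h4 : S.toNFCseq.dn (S.nseq ℓ) e (z i) = some w :=
      NFCseq.Xpt.dn_of_coord (by rw [← he]; exact hz i) h1
    have hzl : z i < S.toNFCseq.hgt (S.nseq ℓ + e) := by
      rw [← he]; exact NFCseq.Xpt.lt_hgt (hz i)
    have h5 := S.toNFCseq.dn_shift (j' := z i + D ℓ) hzl h4 h2 (by simp only [hDdef]; omega)
    refine ⟨?_, v', ?_⟩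
    · have := S.toNFCseq.dn_bound hzl h4
      rw [he]; simp only [hDdef]; omega
    · have e2 : L - N = (S.nseq ℓ - N) + e := by omega
      have e3 : N + (S.nseq ℓ - N) = S.nseq ℓ := by omega
      rw [e2, S.toNFCseq.dn_comp, e3, h5]
      exact h3
  have hsum : ∑ ℓ ∈ Finset.Ico ℓ₀ (ℓ₀ + K), σ (S.toNFC.bx d L fun i => z i + D ℓ) ≤
      σ (S.toNFC.towerD d N) := by
    rw [← measure_biUnion_finset]
    · refine measure_mono (iUnion₂_subset fun ℓ hℓ => ?_)
      intro x hx i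
      obtain ⟨v', hv'⟩ := (key ℓ hℓ i).2
      have e : L = N + (L - N) := by omega
      have hxi' : (x i).1 (N + (L - N)) = some (z i + D ℓ) := by rw [← e]; exact hx i
      exact Option.ne_none_iff_exists'.2 ⟨v', NFCseq.Xpt.coord_of hxi' hv'⟩
    · intro ℓ _ ℓ' _ hne
      refine Set.disjoint_left.2 fun x h1 h2 => hne (hDmono.injective ?_)
      have := congrFun (NFC.bx_unique h1 h2) ⟨0, hd⟩
      simpa using this
    · exact fun _ _ => NFC.bx_meas _ _
  have hge : (K : ℝ≥0∞) * c ≤ σ (S.toNFC.towerD d N) := by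
    refine le_trans ?_ hsum
    calc (K : ℝ≥0∞) * c = ∑ ℓ ∈ Finset.Ico ℓ₀ (ℓ₀ + K), c := by simp
      _ ≤ _ := Finset.sum_le_sum fun ℓ hℓ => by
        rw [box_translate hinv (D ℓ) fun i => (key ℓ hℓ i).1]
        exact hcz
  exact absurd hK (not_lt.2 hge)

end NFCX

/-! ### Limits of empirical measures along ultrafilters -/

theorem exists_ultrafilter_lim (𝒰 : Ultrafilter ℕ) (u : ℕ → ℝ≥0∞) :
    ∃ a, Tendsto u 𝒰 (𝓝 a) :=
  ⟨_, (𝒰.map u).le_nhds_lim⟩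

namespace NFC

variable {S : NFC} {d : ℕ}

theorem emp_apply (o : ℤ → S.Xd d) (J : Finset ℤ) {A : Set (S.Xd d)} (hA : MeasurableSet A) :
    S.emp d o J A = ((J.filter fun t => o t ∈ A).card : ℝ≥0∞) := by
  unfold emp
  rw [Measure.finsetSum_apply]
  simp only [Measure.dirac_apply' _ hA, indicator_apply, Pi.one_apply]
  rw [Finset.sum_boole]

theorem emp_ne_top (o : ℤ → S.Xd d) (J : Finset ℤ) {A : Set (S.Xd d)} (hA : MeasurableSet A) :
    S.emp d o J A ≠ ⊤ := by
  rw [emp_apply o J hA]; exact ENNReal.natCast_ne_top _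

theorem emp_sdiff (o : ℤ → S.Xd d) {I J : Finset ℤ} (h : J ⊆ I) :
    S.emp d o J + S.emp d o (I \ J) = S.emp d o I := by
  unfold emp
  rw [add_comm]; exact Finset.sum_sdiff h

/-- Convergence of Radon measures gives the convergence of the ratios on the whole ring. -/
theorem ratio_tendsto {γ : ℕ → Measure (S.Xd d)} {σ : Measure (S.Xd d)}
    (hγ : ∀ k, ∀ R ∈ S.cylRing d, γ k R ≠ ⊤) (hR : S.IsRadon d σ) (h : S.RTendsto d γ σ) {N : ℕ}
    (hN : 0 < σ (S.towerD d N)) {R : Set (S.Xd d)} (hRC : R ∈ S.cylRing d) :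
    Tendsto (fun k => γ k R / γ k (S.towerD d N)) atTop (𝓝 (σ R / σ (S.towerD d N))) := by
  obtain ⟨n, hn, F, rfl⟩ := cylRing_level hRC N
  have hmono := towerD_mono (S := S) (d := d) hn
  have hn0 : 0 < σ (S.towerD d n) := hN.trans_le (measure_mono hmono)
  obtain ⟨h1, h2⟩ := h n hn0
  have hcyl : ∀ G, Tendsto (fun k => γ k (S.cyl d n G) / γ k (S.towerD d n)) atTop
      (𝓝 (σ (S.cyl d n G) / σ (S.towerD d n))) := by
    intro G
    simp only [measure_cyl, div_eq_mul_inv, Finset.sum_mul]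
    refine tendsto_finsetSum _ fun v hv => ?_
    simpa only [div_eq_mul_inv] using h2 _ (bx_isNBox (Finset.mem_filter.1 hv).1)
  obtain ⟨G, hG⟩ : ∃ G, S.towerD d N = S.cyl d n G := by
    obtain ⟨c, rfl⟩ := Nat.exists_eq_add_of_le hn
    exact ⟨_, (towerD_eq N).trans (cyl_raise N c univ)⟩
  have hq : ∀ {a b c : ℝ≥0∞}, c ≠ 0 → c ≠ ⊤ → a / c / (b / c) = a / b := fun h0 ht => by
    simp only [div_eq_mul_inv _ (_ : ℝ≥0∞)] at *
    rw [← div_eq_mul_inv, ENNReal.mul_div_mul_right _ _ (ENNReal.inv_ne_zero.2 ht)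
      (ENNReal.inv_ne_top.2 h0), div_eq_mul_inv]
  have h3 := ENNReal.Tendsto.div (hcyl F) (Or.inr ?_) (hcyl G) (Or.inl ?_)
  · rw [hq hn0.ne' (hR n).ne, ← hG] at h3
    refine h3.congr' ?_
    filter_upwards [h1] with k hk
    rw [hq hk.ne' (hγ k _ (towerD_mem n)), hG]
  · rw [← hG]
    exact (ENNReal.div_pos hN.ne' (hR n).ne).ne'
  · rw [← hG]
    exact ENNReal.div_ne_top (hR N).ne hn0.ne.symm

/-- Limits, along an ultrafilter, of measures dominated by a convergent sequence are measures. -/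
theorem exists_lim_measure {σ : Measure (S.Xd d)} (hR : S.IsRadon d σ) {c : ℝ≥0∞} (hc : c ≠ ⊤)
    {γ γ' : ℕ → Measure (S.Xd d)} {s : ℕ → ℝ≥0∞} {𝒰 : Ultrafilter ℕ} (hle : ∀ k, γ k ≤ γ' k)
    (hlim : ∀ R ∈ S.cylRing d, Tendsto (fun k => γ' k R / s k) 𝒰 (𝓝 (c * σ R))) :
    ∃ τ : Measure (S.Xd d), ∀ R ∈ S.cylRing d, Tendsto (fun k => γ k R / s k) 𝒰 (𝓝 (τ R)) := by
  choose m hm using fun R => exists_ultrafilter_lim 𝒰 fun k => γ k R / s k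
  suffices hτ : ∃ τ : Measure (S.Xd d), ∀ R ∈ S.cylRing d, τ R = m R by
    obtain ⟨τ, hτ⟩ := hτ
    exact ⟨τ, fun R h => by rw [hτ R h]; exact hm R⟩
  refine exists_measure_of_dominated (isSetRing_cylRing (S := S) (d := d))
    generateFrom_cylRing (c • σ) ?_ m ?_ ?_ ?_
  · rintro R ⟨n, F, rfl⟩
    exact ENNReal.mul_ne_top hc (ne_top_of_le_ne_top (hR n).ne
      (measure_mono (cyl_subset_towerD n F)))
  · refine tendsto_nhds_unique (hm ∅) ?_
    simp
  · intro A B hA hB hAB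
    refine tendsto_nhds_unique (hm (A ∪ B)) (((hm A).add (hm B)).congr fun k => ?_)
    rw [measure_union hAB (cylRing_meas hB), ENNReal.add_div]
  · intro R h
    exact le_of_tendsto_of_tendsto' (hm R) (hlim R h) fun k =>
      ENNReal.div_le_div_right (hle k R) _

/-- Along an interval, the numbers of visits to a box and to its translate differ by at most one. -/
theorem emp_shift {o : ℤ → S.Xd d} (ho : ∀ j, S.Td d (o j) = o (j + 1)) {J : Finset ℤ}
    (hJ : IsIntervalZ J) {n : ℕ} {v : Fin d → ℕ} (hv : v ∈ S.marg d n) :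
    S.emp d o J (S.bx d n v) ≤ S.emp d o J (S.bx d n fun i => v i + 1) + 1 ∧
    S.emp d o J (S.bx d n fun i => v i + 1) ≤ S.emp d o J (S.bx d n v) + 1 := by
  obtain ⟨a, b, -, rfl⟩ := hJ
  have key : ∀ t, o (t + 1) ∈ S.bx d n (fun i => v i + 1) ↔ o t ∈ S.bx d n v := fun t => by
    rw [← ho t, ← bx_preimage hv]; rfl
  rw [emp_apply o _ (bx_meas _ _), emp_apply o _ (bx_meas _ _)]
  constructor
  · norm_cast
    refine le_trans ?_ (Finset.card_insert_le (b + 1) _)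
    rw [← Finset.card_map (addRightEmbedding (1 : ℤ))]
    refine Finset.card_le_card fun t ht => ?_
    simp only [Finset.mem_map, Finset.mem_filter, Finset.mem_Icc, addRightEmbedding_apply] at ht
    obtain ⟨u, ⟨hu1, hu2⟩, rfl⟩ := ht
    simp only [Finset.mem_insert, Finset.mem_filter, Finset.mem_Icc]
    rcases eq_or_ne u b with rfl | hne
    · exact Or.inl rfl
    · exact Or.inr ⟨by omega, (key u).2 hu2⟩
  · norm_cast
    refine le_trans ?_ (Finset.card_insert_le (a - 1) _)
    rw [← Finset.card_map (addRightEmbedding (-1 : ℤ))]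
    refine Finset.card_le_card fun t ht => ?_
    simp only [Finset.mem_map, Finset.mem_filter, Finset.mem_Icc, addRightEmbedding_apply] at ht
    obtain ⟨u, ⟨hu1, hu2⟩, rfl⟩ := ht
    simp only [Finset.mem_insert, Finset.mem_filter, Finset.mem_Icc]
    rcases eq_or_ne u a with rfl | hne
    · exact Or.inl (by ring)
    · refine Or.inr ⟨by omega, (key _).1 ?_⟩
      simpa using hu2

end NFC

namespace NFCX

variable {S : NFCX} {d : ℕ}

/-- The number of visits to `C_N^d` tends to infinity: otherwise the number of visits to a box of
small enough measure would eventually lie strictly between `0` and `1`. -/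
theorem emp_tendsto_top {σ : Measure (S.toNFC.Xd d)} (hd : 0 < d) (hR : S.toNFC.IsRadon d σ)
    (hconull : σ {y : S.toNFC.Xd d | ¬ ∀ i, y i ∈ S.Xinf} = 0)
    (hinv : ∀ n, ∀ v ∈ S.toNFC.marg d n,
      σ (S.toNFC.bx d n v) = σ (S.toNFC.bx d n fun i => v i + 1))
    {N : ℕ} {v₁ : Fin d → ℕ} (hpos : 0 < σ (S.toNFC.bx d N v₁)) (hv1 : ∀ i, 1 ≤ v₁ i)
    (hv2 : ∀ i, v₁ i + 1 < S.toNFCseq.hgt N) (hN : 0 < σ (S.toNFC.towerD d N))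
    {o : ℤ → S.toNFC.Xd d} {I : ℕ → Finset ℤ}
    (hconv : S.toNFC.RTendsto d (fun m => S.toNFC.emp d o (I m)) σ)
    {𝒰 : Ultrafilter ℕ} (h𝒰 : (𝒰 : Filter ℕ) ≤ atTop) :
    Tendsto (fun m => S.toNFC.emp d o (I m) (S.toNFC.towerD d N)) 𝒰 (𝓝 ⊤) := by
  obtain ⟨a, ha⟩ := exists_ultrafilter_lim 𝒰
    fun m => S.toNFC.emp d o (I m) (S.toNFC.towerD d N)
  rcases eq_or_ne a ⊤ with rfl | hat
  · exact ha
  exfalso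
  obtain ⟨n, v, hb0, hb1⟩ := exists_small_box hd hR hconull hinv hpos hv1 hv2
    (c := σ (S.toNFC.towerD d N) / a) (ENNReal.div_pos hN.ne' hat)
  have hrat := (NFC.ratio_tendsto (fun k R h => NFC.emp_ne_top o (I k) (NFC.cylRing_meas h)) hR
    hconv hN (NFC.bx_mem n v)).mono_left h𝒰
  have hr0 : σ (S.toNFC.bx d n v) / σ (S.toNFC.towerD d N) ≠ 0 :=
    (ENNReal.div_pos hb0.ne' (hR N).ne).ne'
  have hrt : σ (S.toNFC.bx d n v) / σ (S.toNFC.towerD d N) ≠ ⊤ :=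
    ENNReal.div_ne_top hb1.ne_top hN.ne'
  have hmul := ENNReal.Tendsto.mul hrat (Or.inl hr0) ha (Or.inr hrt)
  have hlt : σ (S.toNFC.bx d n v) / σ (S.toNFC.towerD d N) * a < 1 := by
    rcases eq_or_ne a 0 with rfl | ha0
    · simp
    · rw [← ENNReal.lt_div_iff_mul_lt (Or.inl ha0) (Or.inl hat),
        ENNReal.div_lt_iff (Or.inl hN.ne') (Or.inl (hR N).ne)]
      rwa [one_div, mul_comm, ← div_eq_mul_inv]
  have e1 := hmul.eventually (gt_mem_nhds hlt)
  have e2 := hrat.eventually (lt_mem_nhds (pos_iff_ne_zero.2 hr0))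
  have e3 := h𝒰 (hconv N hN).1
  obtain ⟨m, h1, h2, h3⟩ := (e1.and (e2.and e3)).exists
  rw [ENNReal.div_mul_cancel h3.ne' (NFC.emp_ne_top o _ (NFC.towerD_meas N))] at h1
  have h4 : S.toNFC.emp d o (I m) (S.toNFC.bx d n v) ≠ 0 := by
    rintro h
    rw [h] at h2
    simp at h2
  rw [NFC.emp_apply o _ (NFC.bx_meas n v)] at h1 h4
  norm_cast at h1 h4
  omega

end NFCX

/-! ### The conclusion -/

namespace NFCX

variable {S : NFCX} {d : ℕ}

/-- The tower `n_{ℓ-1} - k(ℓ-1)` is eventually above any given tower. -/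
theorem le_nseq_sub_kOf {N ℓ : ℕ} (h : N + 2 ≤ ℓ) :
    N ≤ S.nseq (ℓ - 1) - S.toNFCseq.kOf (ℓ - 1) := by
  have h1 := S.toNFCseq.kOf_lt (ℓ := ℓ - 1) (by omega)
  have h2 := S.toNFCseq.le_nseq_sub (ℓ - 1)
  omega

end NFCX

/-- Under the assumptions on the sequences of intervals `(I_m)`, `(J_m)`
(with `J_m ⊆ I_m`, `I_m` contained in an `n_{ℓ_m}`-crossing, `η h_{n(m)} ≤ |J_m| ≤ h_{n(m)}`,
`|I_m| ≤ M h_{n(m)}`), if the empirical measures `γ_{I_m}` converge to `σ`, then so do the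
`γ_{J_m}`. -/
theorem stmt18 (S : NFCX) (d : ℕ) (hd : 2 ≤ d) (η : ℝ) (hη0 : 0 < η)
    (hη1 : η < 1 / (100 * d))
    (σ : Measure (S.toNFC.Xd d)) (hσ0 : σ ≠ 0) (hR : S.toNFC.IsRadon d σ)
    (herg : Ergodic (S.toNFC.Td d) σ)
    (hconull : σ {y : S.toNFC.Xd d | ¬ ∀ i, y i ∈ S.Xinf} = 0)
    (o : ℤ → S.toNFC.Xd d) (hto : S.IsTypicalOrbit d σ o)
    (I J : ℕ → Finset ℤ) (hJI : ∀ m, J m ⊆ I m)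
    (hIint : ∀ m, IsIntervalZ (I m)) (hJint : ∀ m, IsIntervalZ (J m))
    (ℓm nm : ℕ → ℕ) (M : ℝ) (hM : 0 < M)
    (hℓ : Tendsto ℓm atTop atTop)
    (hn1 : ∀ m, S.nseq (ℓm m - 1) - S.toNFC.toNFCseq.kOf (ℓm m - 1)
      + pOne d + 2 * pTwo η ≤ nm m)
    (hn2 : ∀ m, nm m < S.nseq (ℓm m))
    (hIm : ∀ m, ∃ K : Finset ℤ, S.toNFC.IsCrossing d o (S.nseq (ℓm m)) K ∧ I m ⊆ K)
    (hJlo : ∀ m, η * (S.toNFC.toNFCseq.hgt (nm m) : ℝ) ≤ ((J m).card : ℝ))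
    (hJhi : ∀ m, ((J m).card : ℝ) ≤ (S.toNFC.toNFCseq.hgt (nm m) : ℝ))
    (hIhi : ∀ m, ((I m).card : ℝ) ≤ M * (S.toNFC.toNFCseq.hgt (nm m) : ℝ))
    (hconv : S.toNFC.RTendsto d (fun m => S.toNFC.emp d o (I m)) σ) :
    S.toNFC.RTendsto d (fun m => S.toNFC.emp d o (J m)) σ := by
  have ho := hto.1
  have hd0 : 0 < d := by omega
  have hinv : ∀ n, ∀ v ∈ S.toNFC.marg d n,
      σ (S.toNFC.bx d n v) = σ (S.toNFC.bx d n fun i => v i + 1) := fun n v hv => by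
    rw [← NFC.bx_preimage hv]
    exact herg.toMeasurePreserving.measure_preimage (NFC.bx_meas _ _).nullMeasurableSet
  obtain ⟨N, v, hpos, hv1, hv2⟩ := NFCX.exists_pos_box hσ0 hconull (2 * retQ η M + d + 3)
  have hN : 0 < σ (S.toNFC.towerD d N) := hpos.trans_le (measure_mono (by
    rw [NFC.bx_eq_cyl]; exact NFC.cyl_subset_towerD _ _))
  set c := (σ (S.toNFC.towerD d N))⁻¹ with hc
  have hct : c ≠ ⊤ := ENNReal.inv_ne_top.2 hN.ne'
  have hI : ∀ R ∈ S.toNFC.cylRing d, Tendsto (fun m => S.toNFC.emp d o (I m) R /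
      S.toNFC.emp d o (I m) (S.toNFC.towerD d N)) atTop (𝓝 (c * σ R)) := by
    intro R h
    have := NFC.ratio_tendsto (fun k R h => NFC.emp_ne_top o (I k) (NFC.cylRing_meas h)) hR
      hconv hN h
    rwa [div_eq_mul_inv, mul_comm] at this
  -- Along every ultrafilter, the limit of the empirical measures of `J` is a multiple of `σ`.
  have main : ∀ 𝒰 : Ultrafilter ℕ, (𝒰 : Filter ℕ) ≤ atTop → ∃ a : ℝ≥0∞, a ≠ 0 ∧ a ≠ ⊤ ∧
      ∀ R ∈ S.toNFC.cylRing d, Tendsto (fun m => S.toNFC.emp d o (J m) R /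
        S.toNFC.emp d o (I m) (S.toNFC.towerD d N)) 𝒰 (𝓝 (a * σ R)) := by
    intro 𝒰 h𝒰
    obtain ⟨τ, hτ⟩ := NFC.exists_lim_measure (γ := fun m => S.toNFC.emp d o (J m)) hR hct
      (fun m => (Measure.le_add_right le_rfl).trans_eq (NFC.emp_sdiff o (hJI m)))
      fun R h => (hI R h).mono_left h𝒰
    obtain ⟨τ', hτ'⟩ := NFC.exists_lim_measure (γ := fun m => S.toNFC.emp d o (I m \ J m)) hR hct
      (fun m => (Measure.le_add_left le_rfl).trans_eq (NFC.emp_sdiff o (hJI m)))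
      fun R h => (hI R h).mono_left h𝒰
    have hsum : ∀ R ∈ S.toNFC.cylRing d, τ R + τ' R = c * σ R := fun R h => by
      refine tendsto_nhds_unique (((hτ R h).add (hτ' R h)).congr fun m => ?_)
        ((hI R h).mono_left h𝒰)
      rw [← ENNReal.add_div, ← Measure.add_apply, NFC.emp_sdiff o (hJI m)]
    have htop := NFCX.emp_tendsto_top hd0 hR hconull hinv hpos
      (fun i => by have := hv1 i; omega) (fun i => by have := hv2 i; omega) hN hconv h𝒰
    have hone : Tendsto (fun m => 1 / S.toNFC.emp d o (I m) (S.toNFC.towerD d N)) 𝒰 (𝓝 0) := by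
      simpa using tendsto_inv_iff.2 htop
    have hτinv : ∀ n, ∀ w ∈ S.toNFC.marg d n,
        τ (S.toNFC.bx d n w) = τ (S.toNFC.bx d n fun i => w i + 1) := by
      intro n w hw
      have h1 := hτ _ (NFC.bx_mem n w)
      have h2 := hτ _ (NFC.bx_mem (S := S.toNFC) n fun i => w i + 1)
      apply le_antisymm
      · refine le_of_tendsto_of_tendsto' h1 (by simpa only [add_zero] using h2.add hone) fun m => ?_
        rw [← ENNReal.add_div]
        exact ENNReal.div_le_div_right (NFC.emp_shift ho (hJint m) hw).1 _
      · refine le_of_tendsto_of_tendsto' h2 (by simpa only [add_zero] using h1.add hone) fun m => ?_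
        rw [← ENNReal.add_div]
        exact ENNReal.div_le_div_right (NFC.emp_shift ho (hJint m) hw).2 _
    obtain ⟨a, rfl⟩ := NFC.eq_smul_of_box_invariant hR herg (NFCX.marg_conull hconull) hct hsum
      hτinv
    refine ⟨a, ?_, ?_, hτ⟩
    · rintro rfl
      -- the visits to `C_N^d` in `J` are a positive proportion of the visits to the box in `I`
      have hbd : ∀ᶠ m in (𝒰 : Filter ℕ), S.toNFC.emp d o (I m) (S.toNFC.bx d N v) /
          S.toNFC.emp d o (I m) (S.toNFC.towerD d N) ≤
          ((2 * retQ η M + 1) * (d + 1) : ℕ) * (S.toNFC.emp d o (J m) (S.toNFC.towerD d N) /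
            S.toNFC.emp d o (I m) (S.toNFC.towerD d N)) := by
        filter_upwards [h𝒰 (hℓ.eventually_ge_atTop (N + 2))] with m hm
        obtain ⟨K, hK, hIK⟩ := hIm m
        have hcard := NFC.card_le_card_return hη0 ho (hJI m) (hIint m) (hJint m)
          (ℓ := ℓm m) (by omega) (NFCX.le_nseq_sub_kOf hm) (hn1 m) (hn2 m) hK hIK (hJlo m)
          (hIhi m) hv1 hv2
        rw [← mul_div_assoc]
        refine ENNReal.div_le_div_right ?_ _
        rw [NFC.emp_apply o _ (NFC.bx_meas _ _), NFC.emp_apply o _ (NFC.towerD_meas _)]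
        norm_cast
        convert hcard using 3
        rfl
      have h0 := le_of_tendsto_of_tendsto ((hI _ (NFC.bx_mem N v)).mono_left h𝒰)
        (ENNReal.Tendsto.const_mul (hτ _ (NFC.towerD_mem N))
          (Or.inr (ENNReal.natCast_ne_top ((2 * retQ η M + 1) * (d + 1))))) hbd
      rw [zero_smul, Measure.coe_zero, Pi.zero_apply, mul_zero, nonpos_iff_eq_zero,
        mul_eq_zero] at h0
      rcases h0 with h0 | h0
      · exact (ENNReal.inv_ne_zero.2 (hR N).ne) h0
      · exact hpos.ne' h0
    · rintro rfl
      have h1 := hsum _ (NFC.towerD_mem N)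
      rw [Measure.smul_apply, smul_eq_mul, ENNReal.top_mul hN.ne', top_add, hc,
        ENNReal.inv_mul_cancel hN.ne' (hR N).ne] at h1
      exact ENNReal.top_ne_one h1
  intro n hn
  constructor
  · rw [Filter.eventually_iff, mem_iff_ultrafilter]
    intro 𝒰 h𝒰
    obtain ⟨a, ha0, hat, ha⟩ := main 𝒰 h𝒰
    have h1 := (ha _ (NFC.towerD_mem n)).eventually
      (lt_mem_nhds (ENNReal.mul_pos ha0 hn.ne'))
    filter_upwards [h1] with m hm
    refine pos_iff_ne_zero.2 fun h => ?_
    rw [h] at hm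
    simp at hm
  · intro B hB
    obtain ⟨w, -, rfl⟩ := NFC.isNBox_bx hB
    rw [tendsto_iff_ultrafilter]
    intro 𝒰 h𝒰
    obtain ⟨a, ha0, hat, ha⟩ := main 𝒰 h𝒰
    have h1 := ENNReal.Tendsto.div (ha _ (NFC.bx_mem n w))
      (Or.inr (mul_ne_zero ha0 hn.ne')) (ha _ (NFC.towerD_mem n))
      (Or.inl (ENNReal.mul_ne_top hat (hR n).ne))
    rw [ENNReal.mul_div_mul_left _ _ ha0 hat] at h1
    refine h1.congr' ?_
    filter_upwards [h𝒰 (hconv N hN).1] with m hm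
    have hm' := NFC.emp_ne_top o (I m) (NFC.towerD_meas (S := S.toNFC) (d := d) N)
    simp only [div_eq_mul_inv]
    rw [← div_eq_mul_inv, ENNReal.mul_div_mul_right _ _ (ENNReal.inv_ne_zero.2 hm')
      (ENNReal.inv_ne_top.2 hm.ne'), div_eq_mul_inv]
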